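/- arXiv:2601.18370 — 3 statements merged into one kernel-verified Lean document; each statement's English description precedes it below -/
import Mathlib

section
/- Let (V; M0,...,M4; c) be a Higmanian matrix configuration with valencies ni = c(i,i,0). Set (as rational numbers) α = n1+1, β = n2/(n1+1), γ = n3(n1+1)/(n3+n4), δ = (n3+n4)/(n1+1), ε = δ−β−1, and τ = c(4,3,4). Then the intersection numbers satisfy (as equalities of rationals): c(0,2,2)=1, c(1,2,2)=α−1, c(2,2,0)=αβ, c(2,2,1)=αβ, c(2,2,2)=α(β−1), c(3,2,3)=βγ, c(3,2,4)=βγ, c(4,2,3)=β(α−γ), c(4,2,4)=β(α−γ); c(0,3,3)=1, c(1,3,3)=γ−1, c(1,3,4)=γ, c(2,3,3)=βγ, c(2,3,4)=βγ, c(3,3,0)=γδ, c(3,3,1)=δγ(γ−1)/(α−1), c(3,3,2)=δγ²/α, c(3,3,3)=2εγ−τ−α(εγ−τ)/γ, c(3,3,4)=εγ−τ, c(4,3,0)=0, c(4,3,1)=δγ(α−γ)/(α−1), c(4,3,2)=δγ(α−γ)/α, c(4,3,3)=(εγ−τ)(α−γ)/γ; c(0,4,4)=1, c(1,4,3)=α−γ,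 c(1,4,4)=α−γ−1, c(2,4,3)=β(α−γ), c(2,4,4)=β(α−γ), c(3,4,0)=0, c(3,4,1)=δγ(α−γ)/(α−1), c(3,4,2)=δγ(α−γ)/α, c(3,4,3)=(εγ−τ)(α−γ)/γ, c(3,4,4)=τ, c(4,4,0)=δ(α−γ), c(4,4,1)=δ(α−γ)(α−γ−1)/(α−1), c(4,4,2)=δ(α−γ)²/α, c(4,4,3)=τ(α−γ)/γ, c(4,4,4)=ε(α−γ)−τ; and all other intersection numbers c(i,j,k) with j ∈ {2,3,4} vanish. -/
open Matrix Finset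

/-- A *Higmanian matrix configuration* on a nonempty finite set `V`:
five nonzero symmetric `{0,1}`-matrices `M 0, …, M 4` over `ℤ` summing to the all-ones
matrix, with `M 0 = I`, structure constants `c`, parabolic conditions for
`N0 = M0 + M1` and `N1 = M0 + M1 + M2`, standard ordering `n3 ≤ n4`, and triviality of
the radicals of `M 3` and `M 4`. -/
structure HigmanianConfig (V : Type*) [Fintype V] [DecidableEq V] : Type _ where
  nonempty : Nonempty V
  M : Fin 5 → Matrix V V ℤ
  c : Fin 5 → Fin 5 → Fin 5 → ℕ
  M_ne_zero : ∀ i, M i ≠ 0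
  M_symm : ∀ i, (M i)ᵀ = M i
  M_entries : ∀ i x y, M i x y = 0 ∨ M i x y = 1
  M_zero : M 0 = 1
  sum_M : M 0 + M 1 + M 2 + M 3 + M 4 = Matrix.of fun _ _ => 1
  mul_M : ∀ i j, M i * M j = ∑ k : Fin 5, (c i j k : ℤ) • M k
  N0_sq : (M 0 + M 1) * (M 0 + M 1) = ((1 + c 1 1 0 : ℕ) : ℤ) • (M 0 + M 1)
  N1_sq : (M 0 + M 1 + M 2) * (M 0 + M 1 + M 2)
      = ((1 + c 1 1 0 + c 2 2 0 : ℕ) : ℤ) • (M 0 + M 1 + M 2)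
  N1_ne_J : M 0 + M 1 + M 2 ≠ Matrix.of fun _ _ => 1
  n3_le_n4 : c 3 3 0 ≤ c 4 4 0
  radical : ∀ j ∈ ({3, 4} : Finset (Fin 5)), ∀ T : Finset (Fin 5),
    T.Nonempty → T ⊆ ({1, 2, 3, 4} : Finset (Fin 5)) →
    ¬ ((1 + ∑ t ∈ T, M t) * (1 + ∑ t ∈ T, M t)
          = (1 + ∑ t ∈ T, (c t t 0 : ℤ)) • (1 + ∑ t ∈ T, M t)
        ∧ (1 + ∑ t ∈ T, M t) * M j = (1 + ∑ t ∈ T, (c t t 0 : ℤ)) • M j)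

/-- The valency `nᵢ = c i i 0` of the `i`-th basis matrix. -/
def HigmanianConfig.n {V : Type*} [Fintype V] [DecidableEq V]
    (X : HigmanianConfig V) (i : Fin 5) : ℕ := X.c i i 0

/-!
Write `E` for the adjacency matrix of one of the two parabolics. A product `E * M j` with
`j ∈ {3, 4}` is a combination of `M 3` and `M 4`; since `E` is a multiple of an idempotent and does
not fix `M j` up to scale, the two coefficients agree, and counting ones determines them. The two
parabolics together give the products `M 1 * M j` and `M 2 * M j`. What is left are the coefficients
of `M 3` and `M 4` in `M 3 * M 3`, `M 3 * M 4` and `M 4 * M 4`, which row sums and the symmetry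
`c i j k * n k = c j k i * n i` express through the single unknown `τ`.
-/

/-- A symmetric association scheme on `V` whose relations are indexed by `ι`, given by the
adjacency matrices `adj i` of its relations; `0 : ι` indexes the identity relation and
`c i j k` are the intersection numbers. -/
structure SymmAssocScheme (ι V : Type*) [Fintype ι] [Zero ι] [Fintype V]
    [DecidableEq V] where
  adj : ι → Matrix V V ℤ
  c : ι → ι → ι → ℕ
  adj_ne_zero : ∀ i, adj i ≠ 0
  adj_transpose : ∀ i, (adj i)ᵀ = adj i
  adj_apply_eq_zero_or_one : ∀ i x y, adj i x y = 0 ∨ adj i x y = 1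
  adj_zero : adj 0 = 1
  sum_adj : ∑ i, adj i = Matrix.of fun _ _ => 1
  adj_mul_adj : ∀ i j, adj i * adj j = ∑ k, c i j k • adj k

namespace SymmAssocScheme

variable {ι V : Type*} [Fintype ι] [Zero ι] [Fintype V] [DecidableEq V]
  (X : SymmAssocScheme ι V)

lemma adj_apply_nonneg (i : ι) (x y : V) : 0 ≤ X.adj i x y := by
  rcases X.adj_apply_eq_zero_or_one i x y with h | h <;> simp [h]

lemma sum_adj_apply (x y : V) : ∑ i, X.adj i x y = 1 := by
  rw [← Matrix.sum_apply, X.sum_adj, Matrix.of_apply]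

lemma adj_apply_comm (i : ι) (x y : V) : X.adj i x y = X.adj i y x :=
  congrFun (congrFun (X.adj_transpose i) y) x

lemma exists_adj_apply_eq_one (i : ι) : ∃ x y, X.adj i x y = 1 := by
  by_contra! h
  exact X.adj_ne_zero i <| Matrix.ext fun x y =>
    (X.adj_apply_eq_zero_or_one i x y).resolve_right (h x y)

lemma adj_apply_eq_zero_of_ne {i j : ι} {x y : V} (h : X.adj i x y = 1) (hij : j ≠ i) :
    X.adj j x y = 0 := by
  classical
  have hle : ∑ l ∈ {i, j}, X.adj l x y ≤ 1 := X.sum_adj_apply x y ▸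
    sum_le_sum_of_subset_of_nonneg (subset_univ _) fun l _ _ => X.adj_apply_nonneg l x y
  rw [sum_pair hij.symm, h] at hle
  linarith [X.adj_apply_nonneg j x y]

lemma sum_smul_adj_apply {k : ι} {x y : V} (h : X.adj k x y = 1) (a : ι → ℕ) :
    (∑ i, a i • X.adj i) x y = a k := by
  rw [Matrix.sum_apply, sum_eq_single k]
  · simp [h]
  · intro i _ hi
    simp [X.adj_apply_eq_zero_of_ne h hi]
  · simp

lemma sum_smul_adj_inj {a b : ι → ℕ} :
    ∑ i, a i • X.adj i = ∑ i, b i • X.adj i ↔ a = b := by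
  refine ⟨fun hab => funext fun k => ?_, fun h => h ▸ rfl⟩
  obtain ⟨x, y, h⟩ := X.exists_adj_apply_eq_one k
  have hk := X.sum_smul_adj_apply h a
  rw [hab, X.sum_smul_adj_apply h b] at hk
  exact_mod_cast hk.symm

lemma c_zero_left [DecidableEq ι] (j k : ι) : X.c 0 j k = if k = j then 1 else 0 := by
  suffices X.c 0 j = fun k => if k = j then 1 else 0 from congrFun this k
  rw [← X.sum_smul_adj_inj, ← X.adj_mul_adj, X.adj_zero]
  simp

lemma adj_mul_comm (i j : ι) : X.adj i * X.adj j = X.adj j * X.adj i := by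
  calc X.adj i * X.adj j = (X.adj i * X.adj j)ᵀ := by
        simp only [X.adj_mul_adj, Matrix.transpose_sum, Matrix.transpose_smul, X.adj_transpose]
    _ = X.adj j * X.adj i := by rw [Matrix.transpose_mul, X.adj_transpose, X.adj_transpose]

lemma c_comm (i j : ι) : X.c i j = X.c j i := by
  rw [← X.sum_smul_adj_inj, ← X.adj_mul_adj, ← X.adj_mul_adj, X.adj_mul_comm]

lemma sum_c_mul_c (i j k m : ι) :
    ∑ l, X.c i j l * X.c l k m = ∑ l, X.c j k l * X.c i l m := by
  suffices (fun m => ∑ l, X.c i j l * X.c l k m) = fun m => ∑ l, X.c j k l * X.c i l m from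
    congrFun this m
  rw [← X.sum_smul_adj_inj]
  have h := Matrix.mul_assoc (X.adj i) (X.adj j) (X.adj k)
  simp only [X.adj_mul_adj, sum_mul, mul_sum, Matrix.smul_mul, Matrix.mul_smul, smul_sum,
    smul_smul] at h
  simp only [sum_smul]
  rw [sum_comm, h, sum_comm]

/-- The number of ones in each row of `adj i`, see `sum_adj_row`. -/
def valency (i : ι) : ℕ := X.c i i 0

lemma adj_apply_self_zero (x : V) : X.adj 0 x x = 1 := by
  rw [X.adj_zero, Matrix.one_apply_eq]

lemma adj_mul_adj_apply_self (i j : ι) (x : V) : (X.adj i * X.adj j) x x = X.c i j 0 := by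
  rw [X.adj_mul_adj, X.sum_smul_adj_apply (X.adj_apply_self_zero x)]

lemma c_apply_zero_of_ne {i j : ι} (hij : i ≠ j) : X.c i j 0 = 0 := by
  obtain ⟨x, -⟩ := X.exists_adj_apply_eq_one 0
  have h := X.adj_mul_adj_apply_self i j x
  rw [Matrix.mul_apply, sum_eq_zero] at h
  · exact_mod_cast h.symm
  · intro y _
    rcases X.adj_apply_eq_zero_or_one i x y with hi | hi
    · rw [hi, zero_mul]
    · rw [X.adj_apply_comm j, X.adj_apply_eq_zero_of_ne hi hij.symm, mul_zero]

lemma sum_adj_row (i : ι) (x : V) : ∑ y, X.adj i x y = X.valency i := by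
  rw [valency, ← X.adj_mul_adj_apply_self i i x, Matrix.mul_apply]
  refine sum_congr rfl fun y _ => ?_
  rw [X.adj_apply_comm i y x]
  rcases X.adj_apply_eq_zero_or_one i x y with h | h <;> simp [h]

lemma valency_pos (i : ι) : 0 < X.valency i := by
  obtain ⟨x, y, h⟩ := X.exists_adj_apply_eq_one i
  have hpos : 0 < ∑ y, X.adj i x y :=
    sum_pos' (fun z _ => X.adj_apply_nonneg i x z) ⟨y, mem_univ y, by rw [h]; exact one_pos⟩
  exact_mod_cast X.sum_adj_row i x ▸ hpos

lemma sum_c (i k : ι) : ∑ j, X.c i j k = X.valency i := by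
  obtain ⟨x, y, h⟩ := X.exists_adj_apply_eq_one k
  have hc (j : ι) : (X.c i j k : ℤ) = (X.adj i * X.adj j) x y := by
    rw [X.adj_mul_adj, X.sum_smul_adj_apply h]
  have : (∑ j, X.c i j k : ℤ) = X.valency i := by
    simp only [hc]
    rw [← Matrix.sum_apply, ← mul_sum, X.sum_adj, Matrix.mul_apply, ← X.sum_adj_row i x]
    simp only [Matrix.of_apply, mul_one]
  exact_mod_cast this

-- Multiplied by `|V|`, both sides count the triangles with sides in the relations `i`, `j`, `k`.
lemma c_mul_valency (i j k : ι) : X.c i j k * X.valency k = X.c j k i * X.valency i := by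
  have h := X.sum_c_mul_c i j k 0
  rwa [sum_eq_single_of_mem k (mem_univ k) fun l _ hl => by
      rw [X.c_apply_zero_of_ne hl, mul_zero],
    sum_eq_single_of_mem i (mem_univ i) fun l _ hl => by
      rw [X.c_apply_zero_of_ne hl.symm, mul_zero]] at h

/-- The adjacency matrix of the union of the relations in `S`. -/
def unionAdj (S : Finset ι) : Matrix V V ℤ := ∑ s ∈ S, X.adj s

/-- The valency of the union of the relations in `S`. -/
def unionValency (S : Finset ι) : ℕ := ∑ s ∈ S, X.valency s

/-- The union of the relations in `S` is an equivalence relation (or empty): its adjacency matrix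
squares to a multiple of itself. -/
def IsParabolic (S : Finset ι) : Prop :=
  X.unionAdj S * X.unionAdj S = X.unionValency S • X.unionAdj S

/-- For a parabolic `S` and points `x`, `y` in relation `k`, the number of points in the `S`-class
of `x` that are in relation `j` to `y`. -/
def blockNumber (S : Finset ι) (j k : ι) : ℕ := ∑ s ∈ S, X.c s j k

lemma unionAdj_mul_adj (S : Finset ι) (j : ι) :
    X.unionAdj S * X.adj j = ∑ k, X.blockNumber S j k • X.adj k := by
  simp only [unionAdj, sum_mul, X.adj_mul_adj, blockNumber, sum_smul]
  exact sum_comm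

lemma sum_blockNumber (S : Finset ι) (k : ι) :
    ∑ j, X.blockNumber S j k = X.unionValency S := by
  simp only [blockNumber, unionValency, ← X.sum_c _ k]
  exact sum_comm

lemma blockNumber_mul_valency (S : Finset ι) (j k : ι) :
    X.blockNumber S j k * X.valency k = X.blockNumber S k j * X.valency j := by
  simp only [blockNumber, sum_mul]
  refine sum_congr rfl fun s _ => ?_
  rw [X.c_comm s j, X.c_mul_valency]

namespace IsParabolic

variable {X} {S P : Finset ι} {i j k : ι}

lemma sum_blockNumber_mul_blockNumber (hS : X.IsParabolic S) (j m : ι) :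
    ∑ l, X.blockNumber S j l * X.blockNumber S l m
      = X.unionValency S * X.blockNumber S j m := by
  suffices (fun m => ∑ l, X.blockNumber S j l * X.blockNumber S l m)
      = fun m => X.unionValency S * X.blockNumber S j m from congrFun this m
  rw [← X.sum_smul_adj_inj]
  have h := Matrix.mul_assoc (X.unionAdj S) (X.unionAdj S) (X.adj j)
  rw [hS] at h
  simp only [Matrix.smul_mul, X.unionAdj_mul_adj, mul_sum, Matrix.mul_smul, smul_sum,
    smul_smul] at h
  simp only [sum_smul]
  rw [sum_comm, ← h]

lemma c_eq_zero (hS : X.IsParabolic S) (hi : i ∈ S) (hj : j ∈ S) (hk : k ∉ S) :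
    X.c i j k = 0 := by
  classical
  have hsum : (fun k => ∑ j ∈ S, X.blockNumber S j k)
      = fun k => if k ∈ S then X.unionValency S else 0 := by
    rw [← X.sum_smul_adj_inj]
    calc ∑ k, (∑ j ∈ S, X.blockNumber S j k) • X.adj k
        = X.unionAdj S * ∑ j ∈ S, X.adj j := by
          simp only [mul_sum, X.unionAdj_mul_adj, sum_smul]
          exact sum_comm
      _ = X.unionValency S • X.unionAdj S := hS
      _ = _ := by simp [unionAdj, smul_sum]
  have hk0 := congrFun hsum k
  simp only [hk, if_false, blockNumber, sum_eq_zero_iff] at hk0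
  exact hk0 j hj i hi

lemma c_eq_zero_of_notMem_right (hS : X.IsParabolic S) (hi : i ∈ S) (hj : j ∉ S) (hk : k ∈ S) :
    X.c i j k = 0 := by
  have h := X.c_mul_valency k i j
  rw [hS.c_eq_zero hk hi hj, zero_mul] at h
  exact (Nat.mul_eq_zero.1 h.symm).resolve_right (X.valency_pos k).ne'

lemma blockNumber_eq_zero (hP : X.IsParabolic P) (hSP : S ⊆ P) (hj : j ∉ P) (hk : k ∈ P) :
    X.blockNumber S j k = 0 :=
  sum_eq_zero fun _ hs => hP.c_eq_zero_of_notMem_right (hSP hs) hj hk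

lemma blockNumber_eq_zero_of_notMem_right (hP : X.IsParabolic P) (hSP : S ⊆ P) (hj : j ∈ P)
    (hk : k ∉ P) : X.blockNumber S j k = 0 :=
  sum_eq_zero fun _ hs => hP.c_eq_zero (hSP hs) hj hk

lemma blockNumber_add (hP : X.IsParabolic P) (hSP : S ⊆ P) (hjk : j ≠ k)
    (hPc : ∀ l, l ∉ P ↔ l = j ∨ l = k) (hi : i ∉ P) :
    X.blockNumber S j i + X.blockNumber S k i = X.unionValency S := by
  rw [← X.sum_blockNumber S i, Fintype.sum_eq_add j k hjk]
  intro l hl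
  exact hP.blockNumber_eq_zero_of_notMem_right hSP (by simpa [hl] using hPc l) hi

lemma blockNumber_ne_zero (hP : X.IsParabolic P) (hSP : S ⊆ P) (hjk : j ≠ k)
    (hPc : ∀ l, l ∉ P ↔ l = j ∨ l = k)
    (hrad : X.unionAdj S * X.adj j ≠ X.unionValency S • X.adj j) :
    X.blockNumber S j k ≠ 0 := by
  have hj : j ∉ P := (hPc j).2 (.inl rfl)
  contrapose hrad
  have hkj : X.blockNumber S k j = 0 := by
    have h := X.blockNumber_mul_valency S k j
    rw [hrad, zero_mul] at h
    exact (Nat.mul_eq_zero.1 h).resolve_right (X.valency_pos j).ne'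
  have hjj : X.blockNumber S j j = X.unionValency S := by
    rw [← hP.blockNumber_add hSP hjk hPc hj, hkj, add_zero]
  rw [X.unionAdj_mul_adj, Fintype.sum_eq_single j, hjj]
  intro l hlj
  by_cases hl : l ∈ P
  · rw [hP.blockNumber_eq_zero hSP hj hl, zero_smul]
  · rw [((hPc l).1 hl).resolve_left hlj, hrad, zero_smul]

-- Restricted to `j` and `k`, the block numbers form a `2 × 2` matrix with constant column sums
-- which is a multiple of an idempotent; as its off-diagonal entries are nonzero, it has rank one.
lemma blockNumber_self_eq (hS : X.IsParabolic S) (hP : X.IsParabolic P) (hSP : S ⊆ P)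
    (hjk : j ≠ k) (hPc : ∀ l, l ∉ P ↔ l = j ∨ l = k)
    (hrad : X.unionAdj S * X.adj j ≠ X.unionValency S • X.adj j) :
    X.blockNumber S j j = X.blockNumber S j k := by
  have hj : j ∉ P := (hPc j).2 (.inl rfl)
  have hk : k ∉ P := (hPc k).2 (.inr rfl)
  have hsq := hS.sum_blockNumber_mul_blockNumber j k
  rw [Fintype.sum_eq_add j k hjk fun l hl => by
      rw [hP.blockNumber_eq_zero hSP hj (by simpa [hl] using hPc l), zero_mul],
    mul_comm, ← mul_add, mul_comm] at hsq
  have htrace := Nat.eq_of_mul_eq_mul_right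
    (Nat.pos_of_ne_zero (hP.blockNumber_ne_zero hSP hjk hPc hrad)) hsq
  rw [← hP.blockNumber_add hSP hjk hPc hk] at htrace
  exact Nat.add_right_cancel htrace

lemma blockNumber_mul_valency_add (hS : X.IsParabolic S) (hP : X.IsParabolic P) (hSP : S ⊆ P)
    (hjk : j ≠ k) (hPc : ∀ l, l ∉ P ↔ l = j ∨ l = k)
    (hrad : X.unionAdj S * X.adj j ≠ X.unionValency S • X.adj j) (hi : i ∉ P) :
    X.blockNumber S j i * (X.valency j + X.valency k) = X.unionValency S * X.valency j := by
  have hj : j ∉ P := (hPc j).2 (.inl rfl)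
  have hself := hS.blockNumber_self_eq hP hSP hjk hPc hrad
  have hi' : X.blockNumber S j i = X.blockNumber S j j := by
    rcases (hPc i).1 hi with rfl | rfl
    · rfl
    · exact hself.symm
  calc X.blockNumber S j i * (X.valency j + X.valency k)
      = X.blockNumber S j j * X.valency j + X.blockNumber S k j * X.valency j := by
        rw [hi', mul_add, hself, X.blockNumber_mul_valency S j k, ← hself]
    _ = X.unionValency S * X.valency j := by
        rw [← add_mul, hP.blockNumber_add hSP hjk hPc hj]

end IsParabolic

end SymmAssocScheme

namespace HigmanianConfig

variable {V : Type*} [Fintype V] [DecidableEq V] (X : HigmanianConfig V)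

/-- The symmetric association scheme underlying a Higmanian configuration. -/
def toScheme : SymmAssocScheme (Fin 5) V where
  adj := X.M
  c := X.c
  adj_ne_zero := X.M_ne_zero
  adj_transpose := X.M_symm
  adj_apply_eq_zero_or_one := X.M_entries
  adj_zero := X.M_zero
  sum_adj := by rw [Fin.sum_univ_five, X.sum_M]
  adj_mul_adj i j := by simpa only [natCast_zsmul] using X.mul_M i j

lemma toScheme_unionAdj_insert_zero {T : Finset (Fin 5)} (hT : 0 ∉ T) :
    X.toScheme.unionAdj (insert 0 T) = 1 + ∑ t ∈ T, X.M t := by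
  rw [SymmAssocScheme.unionAdj, sum_insert hT, X.toScheme.adj_zero, toScheme]

lemma toScheme_unionValency_insert_zero {T : Finset (Fin 5)} (hT : 0 ∉ T) :
    X.toScheme.unionValency (insert 0 T) = 1 + ∑ t ∈ T, X.n t := by
  rw [SymmAssocScheme.unionValency, sum_insert hT,
    SymmAssocScheme.valency, X.toScheme.c_zero_left, if_pos rfl]
  rfl

lemma isParabolic_zero_one : X.toScheme.IsParabolic {0, 1} := by
  rw [SymmAssocScheme.IsParabolic, X.toScheme_unionAdj_insert_zero (by decide),
    X.toScheme_unionValency_insert_zero (by decide), sum_singleton, sum_singleton,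
    ← natCast_zsmul, ← X.M_zero]
  exact X.N0_sq

lemma isParabolic_zero_one_two : X.toScheme.IsParabolic {0, 1, 2} := by
  rw [SymmAssocScheme.IsParabolic, X.toScheme_unionAdj_insert_zero (by decide),
    X.toScheme_unionValency_insert_zero (by decide), sum_pair (by decide), sum_pair (by decide),
    ← natCast_zsmul, ← X.M_zero, ← add_assoc, ← add_assoc]
  exact X.N1_sq

lemma unionAdj_mul_M_ne {T : Finset (Fin 5)} (hT : T.Nonempty) (hT' : T ⊆ {1, 2, 3, 4})
    (hpar : X.toScheme.IsParabolic (insert 0 T)) {j : Fin 5} (hj : j ∈ ({3, 4} : Finset (Fin 5))) :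
    X.toScheme.unionAdj (insert 0 T) * X.M j ≠
      X.toScheme.unionValency (insert 0 T) • X.M j := by
  intro h
  have hT0 : 0 ∉ T := fun h0 => absurd (hT' h0) (by decide)
  rw [SymmAssocScheme.IsParabolic] at hpar
  rw [← natCast_zsmul, X.toScheme_unionAdj_insert_zero hT0,
    X.toScheme_unionValency_insert_zero hT0] at h hpar
  push_cast at h hpar
  exact X.radical j hj T hT hT' ⟨hpar, h⟩

lemma blockNumber_mul_valency_add {T : Finset (Fin 5)} (hT : T.Nonempty) (hT' : T ⊆ {1, 2})
    (hpar : X.toScheme.IsParabolic (insert 0 T)) {j k : Fin 5}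
    (hj : j ∈ ({3, 4} : Finset (Fin 5))) (hk : k ∈ ({3, 4} : Finset (Fin 5))) :
    X.toScheme.blockNumber (insert 0 T) j k * (X.n 3 + X.n 4)
      = X.toScheme.unionValency (insert 0 T) * X.n j := by
  have hP := X.isParabolic_zero_one_two
  have hSP : insert 0 T ⊆ {0, 1, 2} := insert_subset_insert 0 hT'
  have hrad := X.unionAdj_mul_M_ne hT (hT'.trans (by decide)) hpar hj
  have hk' : k ∉ ({0, 1, 2} : Finset (Fin 5)) := by decide +revert
  rcases mem_insert.1 hj with rfl | hj
  · exact hpar.blockNumber_mul_valency_add hP hSP (by decide) (by decide) hrad hk'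
  · obtain rfl := mem_singleton.1 hj
    rw [add_comm (X.n 3)]
    exact hpar.blockNumber_mul_valency_add hP hSP (by decide) (by decide) hrad hk'

/-- The size of the classes of the smaller parabolic `{0, 1}`. -/
def α : ℚ := X.n 1 + 1

/-- One less than the number of classes of `{0, 1}` in a class of `{0, 1, 2}`. -/
def β : ℚ := X.n 2 / (X.n 1 + 1)

/-- For `j ∈ {3, 4}`, the number of points of a class of `{0, 1}` that are in relation `j` to a
given point outside its class of `{0, 1, 2}`; the paper's `γ` and `α - γ` are `γ 3` and `γ 4`. -/
def γ (j : Fin 5) : ℚ := X.n j * (X.n 1 + 1) / (X.n 3 + X.n 4)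

/-- The number of classes of `{0, 1}` outside a given class of `{0, 1, 2}`. -/
def δ : ℚ := (X.n 3 + X.n 4) / (X.n 1 + 1)

/-- The number of classes of `{0, 1}` outside the union of two distinct classes of `{0, 1, 2}`. -/
def ε : ℚ := X.δ - X.β - 1

/-- The rational-valued intersection numbers: `p i j` is the coefficient vector of `M i * M j`. -/
def p (i j : Fin 5) : Fin 5 → ℚ := fun k => X.c i j k

lemma n_pos (i : Fin 5) : (0 : ℚ) < X.n i := by
  exact_mod_cast X.toScheme.valency_pos i

lemma n_three_add_n_four_ne_zero : (X.n 3 + X.n 4 : ℚ) ≠ 0 :=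
  (add_pos (X.n_pos 3) (X.n_pos 4)).ne'

lemma α_pos : 0 < X.α := by unfold α; positivity

lemma β_pos : 0 < X.β := div_pos (X.n_pos 2) X.α_pos

lemma γ_pos (j : Fin 5) : 0 < X.γ j :=
  div_pos (mul_pos (X.n_pos j) X.α_pos) (add_pos (X.n_pos 3) (X.n_pos 4))

lemma δ_pos : 0 < X.δ := div_pos (add_pos (X.n_pos 3) (X.n_pos 4)) X.α_pos

lemma n_one : (X.n 1 : ℚ) = X.α - 1 := (add_sub_cancel_right _ _).symm

lemma n_two : (X.n 2 : ℚ) = X.α * X.β := (mul_div_cancel₀ _ X.α_pos.ne').symm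

lemma n_eq_δ_mul_γ (j : Fin 5) : (X.n j : ℚ) = X.δ * X.γ j := by
  have h := X.n_three_add_n_four_ne_zero
  unfold δ γ
  field_simp

lemma γ_three_add_γ_four : X.γ 3 + X.γ 4 = X.α := by
  have h := X.n_three_add_n_four_ne_zero
  unfold γ α
  field_simp

lemma α_sub_γ_three : X.α - X.γ 3 = X.γ 4 := sub_eq_of_eq_add' X.γ_three_add_γ_four.symm

lemma α_sub_one_ne_zero : X.α - 1 ≠ 0 := X.n_one ▸ (X.n_pos 1).ne'

lemma p_comm (i j : Fin 5) : X.p i j = X.p j i :=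
  funext fun k => congrArg Nat.cast (congrFun (X.toScheme.c_comm i j) k)

lemma p_zero_left (j k : Fin 5) : X.p 0 j k = if k = j then 1 else 0 := by
  unfold p
  exact_mod_cast X.toScheme.c_zero_left j k

lemma p_apply_zero_of_ne {i j : Fin 5} (hij : i ≠ j) : X.p i j 0 = 0 :=
  congrArg Nat.cast (X.toScheme.c_apply_zero_of_ne hij) |>.trans Nat.cast_zero

lemma sum_p (i k : Fin 5) :
    X.p i 0 k + X.p i 1 k + X.p i 2 k + X.p i 3 k + X.p i 4 k = X.n i := by
  have h : ∑ j, X.c i j k = X.n i := X.toScheme.sum_c i k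
  rw [Fin.sum_univ_five] at h
  unfold p
  exact_mod_cast h

lemma p_mul_n (i j k : Fin 5) : X.p i j k * X.n k = X.p j k i * X.n i := by
  unfold p
  exact_mod_cast X.toScheme.c_mul_valency i j k

lemma p_zero_right (j k : Fin 5) : X.p j 0 k = if k = j then 1 else 0 := by
  rw [X.p_comm, X.p_zero_left]

lemma p_eq_zero {S : Finset (Fin 5)} (hS : X.toScheme.IsParabolic S) {i j k : Fin 5}
    (hi : i ∈ S) (hj : j ∈ S) (hk : k ∉ S) : X.p i j k = 0 :=
  Nat.cast_eq_zero.2 (hS.c_eq_zero hi hj hk)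

lemma p_eq_zero_of_notMem_right {S : Finset (Fin 5)} (hS : X.toScheme.IsParabolic S)
    {i j k : Fin 5} (hi : i ∈ S) (hj : j ∉ S) (hk : k ∈ S) : X.p i j k = 0 :=
  Nat.cast_eq_zero.2 (hS.c_eq_zero_of_notMem_right hi hj hk)

lemma p_inner_inner_outer {i j k : Fin 5} (hi : i ∈ ({0, 1, 2} : Finset (Fin 5)))
    (hj : j ∈ ({0, 1, 2} : Finset (Fin 5))) (hk : k ∈ ({3, 4} : Finset (Fin 5))) :
    X.p i j k = 0 :=
  X.p_eq_zero X.isParabolic_zero_one_two hi hj (by decide +revert)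

lemma p_inner_outer_inner {i j k : Fin 5} (hi : i ∈ ({0, 1, 2} : Finset (Fin 5)))
    (hj : j ∈ ({3, 4} : Finset (Fin 5))) (hk : k ∈ ({0, 1, 2} : Finset (Fin 5))) :
    X.p i j k = 0 :=
  X.p_eq_zero_of_notMem_right X.isParabolic_zero_one_two hi (by decide +revert) hk

lemma sum_p_inner {i k : Fin 5} (hi : i ∈ ({0, 1, 2} : Finset (Fin 5)))
    (hk : k ∈ ({0, 1, 2} : Finset (Fin 5))) : X.p i 0 k + X.p i 1 k + X.p i 2 k = X.n i := by
  rw [← X.sum_p i k, X.p_inner_outer_inner hi (j := 3) (by decide) hk,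
    X.p_inner_outer_inner hi (j := 4) (by decide) hk, add_zero, add_zero]

lemma p_zero_two : X.p 0 2 = ![0, 0, 1, 0, 0] := by
  funext k
  fin_cases k <;> exact X.p_zero_left _ _

lemma p_zero_three : X.p 0 3 = ![0, 0, 0, 1, 0] := by
  funext k
  fin_cases k <;> exact X.p_zero_left _ _

lemma p_zero_four : X.p 0 4 = ![0, 0, 0, 0, 1] := by
  funext k
  fin_cases k <;> exact X.p_zero_left _ _

lemma p_one_two_one : X.p 1 2 1 = 0 :=
  X.p_eq_zero_of_notMem_right X.isParabolic_zero_one (by decide) (by decide) (by decide)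

lemma p_one_two : X.p 1 2 = ![0, 0, X.α - 1, 0, 0] := by
  have h112 : X.p 1 1 2 = 0 :=
    X.p_eq_zero X.isParabolic_zero_one (by decide) (by decide) (by decide)
  have h122 : X.p 1 2 2 = X.α - 1 := by
    rw [← X.n_one, ← X.sum_p_inner (k := 2) (by decide) (by decide), X.p_zero_right,
      if_neg (by decide), h112, zero_add, zero_add]
  funext k
  fin_cases k
  · exact X.p_apply_zero_of_ne (by decide)
  · exact X.p_one_two_one
  · exact h122
  · exact X.p_inner_inner_outer (by decide) (by decide) (by decide)
  · exact X.p_inner_inner_outer (by decide) (by decide) (by decide)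

lemma p_two_two : X.p 2 2 = ![X.α * X.β, X.α * X.β, X.α * (X.β - 1), 0, 0] := by
  have h221 : X.p 2 2 1 = X.α * X.β := by
    rw [← X.n_two, ← X.sum_p_inner (k := 1) (by decide) (by decide), X.p_zero_right,
      if_neg (by decide), X.p_comm 2 1, X.p_one_two_one, zero_add, zero_add]
  have h222 : X.p 2 2 2 = X.α * (X.β - 1) := by
    have h := X.sum_p_inner (i := 2) (k := 2) (by decide) (by decide)
    rw [X.n_two, X.p_zero_right, if_pos rfl, X.p_comm 2 1, X.p_one_two] at h
    simp only [Matrix.cons_val] at h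
    linarith
  funext k
  fin_cases k
  · exact X.n_two
  · exact h221
  · exact h222
  · exact X.p_inner_inner_outer (by decide) (by decide) (by decide)
  · exact X.p_inner_inner_outer (by decide) (by decide) (by decide)

lemma sum_p_parabolic {T : Finset (Fin 5)} (hT : T.Nonempty) (hT' : T ⊆ {1, 2})
    (hpar : X.toScheme.IsParabolic (insert 0 T)) {j k : Fin 5}
    (hj : j ∈ ({3, 4} : Finset (Fin 5))) (hk : k ∈ ({3, 4} : Finset (Fin 5))) :
    X.p 0 j k + ∑ t ∈ T, X.p t j k = (1 + ∑ t ∈ T, (X.n t : ℚ)) / X.α * X.γ j := by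
  have hT0 : 0 ∉ T := fun h0 => absurd (hT' h0) (by decide)
  have h := congrArg (Nat.cast : ℕ → ℚ) (X.blockNumber_mul_valency_add hT hT' hpar hj hk)
  rw [X.toScheme_unionValency_insert_zero hT0, SymmAssocScheme.blockNumber,
    sum_insert hT0] at h
  push_cast at h
  rw [← eq_div_iff X.n_three_add_n_four_ne_zero] at h
  refine h.trans ?_
  have hα := X.α_pos.ne'
  change _ = _ / X.α * (X.n j * X.α / (X.n 3 + X.n 4))
  field_simp

lemma p_one_outer_apply {j k : Fin 5} (hj : j ∈ ({3, 4} : Finset (Fin 5)))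
    (hk : k ∈ ({3, 4} : Finset (Fin 5))) : X.p 1 j k = X.γ j - if k = j then 1 else 0 := by
  have h := X.sum_p_parabolic (T := {1}) (by decide) (by decide) X.isParabolic_zero_one hj hk
  rw [sum_singleton, sum_singleton, X.p_zero_left, X.n_one, add_sub_cancel,
    div_self X.α_pos.ne'] at h
  linarith

lemma p_two_outer_apply {j k : Fin 5} (hj : j ∈ ({3, 4} : Finset (Fin 5)))
    (hk : k ∈ ({3, 4} : Finset (Fin 5))) : X.p 2 j k = X.β * X.γ j := by
  have h := X.sum_p_parabolic (T := {1, 2}) (by decide) (by decide) X.isParabolic_zero_one_two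
    hj hk
  have hsize : (1 + (X.n 1 + X.n 2 : ℚ)) / X.α = 1 + X.β := by
    rw [X.n_one, X.n_two, div_eq_iff X.α_pos.ne']
    ring
  rw [sum_pair (by decide), sum_pair (by decide), hsize, X.p_zero_left,
    X.p_one_outer_apply hj hk] at h
  linarith

lemma p_outer_outer_one {j k : Fin 5} (hj : j ∈ ({3, 4} : Finset (Fin 5)))
    (hk : k ∈ ({3, 4} : Finset (Fin 5))) :
    X.p j k 1 = X.δ * X.γ k * (X.γ j - if k = j then 1 else 0) / (X.α - 1) := by
  rw [eq_div_iff X.α_sub_one_ne_zero, ← X.n_one, ← X.p_mul_n, X.p_one_outer_apply hj hk,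
    X.n_eq_δ_mul_γ k]
  ring

lemma p_outer_outer_two {j k : Fin 5} (hj : j ∈ ({3, 4} : Finset (Fin 5)))
    (hk : k ∈ ({3, 4} : Finset (Fin 5))) :
    X.p j k 2 = X.δ * X.γ j * X.γ k / X.α := by
  have h := X.p_mul_n 2 j k
  rw [X.p_two_outer_apply hj hk, X.n_eq_δ_mul_γ k, X.n_two] at h
  rw [eq_div_iff X.α_pos.ne']
  refine mul_right_cancel₀ X.β_pos.ne' ?_
  linarith

lemma p_outer_three_add_p_outer_four {j k : Fin 5} (hj : j ∈ ({3, 4} : Finset (Fin 5)))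
    (hk : k ∈ ({3, 4} : Finset (Fin 5))) : X.p j 3 k + X.p j 4 k = X.ε * X.γ j := by
  have h := X.sum_p j k
  rw [X.p_zero_right, X.p_comm j 1, X.p_comm j 2, X.p_one_outer_apply hj hk,
    X.p_two_outer_apply hj hk, X.n_eq_δ_mul_γ j] at h
  unfold ε
  linarith

lemma p_mul_γ (i j k : Fin 5) : X.p i j k * X.γ k = X.p j k i * X.γ i := by
  have h := X.p_mul_n i j k
  rw [X.n_eq_δ_mul_γ, X.n_eq_δ_mul_γ] at h
  refine mul_left_cancel₀ X.δ_pos.ne' ?_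
  linarith

lemma p_one_three : X.p 1 3 = ![0, 0, 0, X.γ 3 - 1, X.γ 3] := by
  funext k
  fin_cases k
  · exact X.p_inner_outer_inner (by decide) (by decide) (by decide)
  · exact X.p_inner_outer_inner (by decide) (by decide) (by decide)
  · exact X.p_inner_outer_inner (by decide) (by decide) (by decide)
  · exact X.p_one_outer_apply (by decide) (by decide)
  · exact (X.p_one_outer_apply (by decide) (by decide)).trans (sub_zero _)

lemma p_one_four : X.p 1 4 = ![0, 0, 0, X.γ 4, X.γ 4 - 1] := by
  funext k
  fin_cases k
  · exact X.p_inner_outer_inner (by decide) (by decide) (by decide)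
  · exact X.p_inner_outer_inner (by decide) (by decide) (by decide)
  · exact X.p_inner_outer_inner (by decide) (by decide) (by decide)
  · exact (X.p_one_outer_apply (by decide) (by decide)).trans (sub_zero _)
  · exact X.p_one_outer_apply (by decide) (by decide)

lemma p_two_outer {j : Fin 5} (hj : j ∈ ({3, 4} : Finset (Fin 5))) :
    X.p 2 j = ![0, 0, 0, X.β * X.γ j, X.β * X.γ j] := by
  funext k
  fin_cases k
  · exact X.p_inner_outer_inner (by decide) hj (by decide)
  · exact X.p_inner_outer_inner (by decide) hj (by decide)
  · exact X.p_inner_outer_inner (by decide) hj (by decide)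
  · exact X.p_two_outer_apply hj (by decide)
  · exact X.p_two_outer_apply hj (by decide)

lemma p_three_three_four : X.p 3 3 4 = X.ε * X.γ 3 - X.p 4 3 4 := by
  rw [← X.p_outer_three_add_p_outer_four (k := 4) (by decide) (by decide), X.p_comm 4 3]
  ring

lemma p_three_four_three :
    X.p 3 4 3 = (X.ε * X.γ 3 - X.p 4 3 4) * X.γ 4 / X.γ 3 := by
  rw [eq_div_iff (X.γ_pos 3).ne', ← X.p_three_three_four, X.p_mul_γ 3 3 4]

lemma p_three_three : X.p 3 3 =
    ![X.γ 3 * X.δ, X.δ * X.γ 3 * (X.γ 3 - 1) / (X.α - 1), X.δ * X.γ 3 ^ 2 / X.α,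
      2 * X.ε * X.γ 3 - X.p 4 3 4 - X.α * (X.ε * X.γ 3 - X.p 4 3 4) / X.γ 3,
      X.ε * X.γ 3 - X.p 4 3 4] := by
  have h333 : X.p 3 3 3
      = 2 * X.ε * X.γ 3 - X.p 4 3 4 - X.α * (X.ε * X.γ 3 - X.p 4 3 4) / X.γ 3 := by
    rw [eq_sub_of_add_eq (X.p_outer_three_add_p_outer_four (k := 3) (by decide) (by decide)),
      X.p_three_four_three, ← X.γ_three_add_γ_four]
    have hγ := (X.γ_pos 3).ne'
    field_simp
    ring
  have h332 : X.p 3 3 2 = X.δ * X.γ 3 ^ 2 / X.α := by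
    rw [X.p_outer_outer_two (by decide) (by decide), mul_assoc, sq]
  funext k
  fin_cases k
  · exact (X.n_eq_δ_mul_γ 3).trans (mul_comm _ _)
  · exact X.p_outer_outer_one (by decide) (by decide)
  · exact h332
  · exact h333
  · exact X.p_three_three_four

lemma p_three_four : X.p 3 4 =
    ![0, X.δ * X.γ 3 * X.γ 4 / (X.α - 1), X.δ * X.γ 3 * X.γ 4 / X.α,
      (X.ε * X.γ 3 - X.p 4 3 4) * X.γ 4 / X.γ 3, X.p 4 3 4] := by
  have h341 : X.p 3 4 1 = X.δ * X.γ 3 * X.γ 4 / (X.α - 1) := by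
    rw [X.p_comm, X.p_outer_outer_one (by decide) (by decide), if_neg (by decide), sub_zero]
  funext k
  fin_cases k
  · exact X.p_apply_zero_of_ne (by decide)
  · exact h341
  · exact X.p_outer_outer_two (by decide) (by decide)
  · exact X.p_three_four_three
  · exact congrFun (X.p_comm 3 4) 4

lemma p_four_four : X.p 4 4 =
    ![X.δ * X.γ 4, X.δ * X.γ 4 * (X.γ 4 - 1) / (X.α - 1), X.δ * X.γ 4 ^ 2 / X.α,
      X.p 4 3 4 * X.γ 4 / X.γ 3, X.ε * X.γ 4 - X.p 4 3 4] := by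
  have h442 : X.p 4 4 2 = X.δ * X.γ 4 ^ 2 / X.α := by
    rw [X.p_outer_outer_two (by decide) (by decide), mul_assoc, sq]
  have h443 : X.p 4 4 3 = X.p 4 3 4 * X.γ 4 / X.γ 3 := by
    rw [eq_div_iff (X.γ_pos 3).ne', X.p_mul_γ]
  funext k
  fin_cases k
  · exact X.n_eq_δ_mul_γ 4
  · exact X.p_outer_outer_one (by decide) (by decide)
  · exact h442
  · exact h443
  · exact eq_sub_of_add_eq' (X.p_outer_three_add_p_outer_four (by decide) (by decide))

end HigmanianConfig

/-- parametrization of the intersection numbers of a Higmanian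
configuration (Lemma on intersection matrices): for `j ∈ {2,3,4}` the numbers
`c(r,j,t)` are given by the matrices `C2`, `C3`, `C4` below (all other such
intersection numbers vanish, being the remaining zero entries). -/
theorem higmanian_intersection_matrices {V : Type*} [Fintype V] [DecidableEq V]
    (X : HigmanianConfig V) (α β γ δ ε τ : ℚ)
    (hα : α = (X.n 1 : ℚ) + 1)
    (hβ : β = (X.n 2 : ℚ) / ((X.n 1 : ℚ) + 1))
    (hγ : γ = (X.n 3 : ℚ) * ((X.n 1 : ℚ) + 1) / ((X.n 3 : ℚ) + (X.n 4 : ℚ)))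
    (hδ : δ = ((X.n 3 : ℚ) + (X.n 4 : ℚ)) / ((X.n 1 : ℚ) + 1))
    (hε : ε = δ - β - 1)
    (hτ : τ = (X.c 4 3 4 : ℚ)) :
    ∀ r t : Fin 5,
      (X.c r 2 t : ℚ) =
        !![0, 0, 1, 0, 0;
           0, 0, α - 1, 0, 0;
           α * β, α * β, α * (β - 1), 0, 0;
           0, 0, 0, β * γ, β * γ;
           0, 0, 0, β * (α - γ), β * (α - γ)] r t ∧
      (X.c r 3 t : ℚ) =
        !![0, 0, 0, 1, 0;
           0, 0, 0, γ - 1, γ;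
           0, 0, 0, β * γ, β * γ;
           γ * δ, δ * γ * (γ - 1) / (α - 1), δ * γ ^ 2 / α,
             2 * ε * γ - τ - α * (ε * γ - τ) / γ, ε * γ - τ;
           0, δ * γ * (α - γ) / (α - 1), δ * γ * (α - γ) / α,
             (ε * γ - τ) * (α - γ) / γ, τ] r t ∧
      (X.c r 4 t : ℚ) =
        !![0, 0, 0, 0, 1;
           0, 0, 0, α - γ, α - γ - 1;
           0, 0, 0, β * (α - γ), β * (α - γ);
           0, δ * γ * (α - γ) / (α - 1), δ * γ * (α - γ) / α,
             (ε * γ - τ) * (α - γ) / γ, τ;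
           δ * (α - γ), δ * (α - γ) * (α - γ - 1) / (α - 1), δ * (α - γ) ^ 2 / α,
             τ * (α - γ) / γ, ε * (α - γ) - τ] r t := by
  obtain rfl : α = X.α := hα
  obtain rfl : β = X.β := hβ
  obtain rfl : γ = X.γ 3 := hγ
  obtain rfl : δ = X.δ := hδ
  obtain rfl : ε = X.ε := hε
  obtain rfl : τ = X.p 4 3 4 := hτ
  rw [X.α_sub_γ_three]
  suffices h : ∀ r, X.p r 2 = _ ∧ X.p r 3 = _ ∧ X.p r 4 = _ from fun r t =>
    ⟨congrFun (h r).1 t, congrFun (h r).2.1 t, congrFun (h r).2.2 t⟩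
  intro r
  fin_cases r
  · exact ⟨X.p_zero_two, X.p_zero_three, X.p_zero_four⟩
  · exact ⟨X.p_one_two, X.p_one_three, X.p_one_four⟩
  · exact ⟨X.p_two_two, X.p_two_outer (by decide), X.p_two_outer (by decide)⟩
  · exact ⟨(X.p_comm 3 2).trans (X.p_two_outer (by decide)),
      X.p_three_three, X.p_three_four⟩
  · exact ⟨(X.p_comm 4 2).trans (X.p_two_outer (by decide)),
      (X.p_comm 4 3).trans X.p_three_four, X.p_four_four⟩
end

section
/- Let p be a prime, e ≥ 1, q = p^e, and let r, s be positive integers with r ≥ s ≥ 1 and 2r ≥ s+2. Let G be any finite abelian group of order q^{2r−s}(q^s−1)/(q−1) containing a subgroup isomorphic to the elementary abelian group (ZMod p)^{e·r} (an elementary abelian subgroup of order q^r). Then there exist a subgroup N ≤ G of order q^s and a subset D ⊆ G such that D is a divisible difference set relative to N satisfying the intersection condition, with parameters m = q^{2r−2s}(q^s−1)/(q−1), n = q^s, k = q^{2r−s−1}(q^s−1)/(q−1), λ1 = q^{2r−s−1}(q^{s−1}−1)/(q−1), λ2 = q^{2r−s−2}(q^s−1)/(q−1); moreover |D ∩ (N+g)|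 = q^{s−1} for every g ∈ G. -/
open Classical

open Finset Module

/-!
Identify the elementary abelian subgroup `H` with an `r`-dimensional vector space over `GF(q)` and
choose an `s`-dimensional subspace `N`. The hyperplanes of `H` that do not contain `N` number
`q^(r-s) * (q^s - 1) / (q - 1)`, which is exactly the index of `H` in `G`, so they can be
distributed bijectively over the cosets of `H`. Let `D` contain one translate of the hyperplane
`U i` in the coset `i`. A difference `g ∈ H` arises inside the coset `i` only if `g ∈ U i`, and then
in `|U i| = q^(r-1)` ways, so its multiplicity counts the hyperplanes through `g`. For `g ∉ H` the
differences compare translates of two distinct hyperplanes `U i` and `U (i - g)`, which meet in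
exactly `q^(r-2)` points because `U i + U (i - g) = H`. Likewise `U i + N = H` forces every coset
of `N` to meet `D` in `|U i ∩ N| = q^(s-1)` points.
-/

section CosetUnion

variable {G : Type*} [AddCommGroup G]

theorem sub_mem_sup_of_sub_mem {A B : AddSubgroup G} {a b x : G} (ha : x - a ∈ A)
    (hb : x - b ∈ B) : b - a ∈ A ⊔ B := by
  rw [← sub_sub_sub_cancel_left a b x]
  exact sub_mem (AddSubgroup.mem_sup_left ha) (AddSubgroup.mem_sup_right hb)

theorem card_filter_product_sub_eq [DecidableEq G] (D : Finset G) (g : G) :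
    #{z ∈ D ×ˢ D | z.1 - z.2 = g} = #{x ∈ D | x - g ∈ D} := by
  rw [card_sub_eq, ← card_inter_vadd]
  congr 1
  ext x
  rw [mem_inter, mem_filter, ← neg_vadd_mem_iff, vadd_eq_add, neg_add_eq_sub]

variable [Fintype G]

theorem card_filter_sub_mem_and_sub_mem {A B : AddSubgroup G} {a b : G} (h : b - a ∈ A ⊔ B) :
    #{x | x - a ∈ A ∧ x - b ∈ B} = Nat.card (A ⊓ B : AddSubgroup G) := by
  obtain ⟨u, hu, v, hv, huv⟩ := AddSubgroup.mem_sup.1 h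
  obtain rfl : b = a + u + v := by rw [add_assoc, huv, add_sub_cancel]
  refine .trans ?_ (Nat.subtype_card ({x | x ∈ A ⊓ B} : Finset G) (by simp)).symm
  refine card_equiv (Equiv.subRight (a + u)) fun x ↦ ?_
  rw [mem_filter_univ, mem_filter_univ, Equiv.subRight_apply, AddSubgroup.mem_inf,
    ← sub_sub x (a + u) v, sub_eq_add_neg _ v, AddSubgroup.add_mem_cancel_right B (neg_mem hv),
    ← sub_sub x a u, sub_eq_add_neg _ u, AddSubgroup.add_mem_cancel_right A (neg_mem hu)]

variable {H N : AddSubgroup G} {U : G ⧸ H → AddSubgroup G} {g : G}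

/-- The union of the translates `i.out + U i`, where `i.out` is a chosen representative of the coset
`i` of `H`. As long as `U i ≤ H`, this set meets the coset `i` exactly in `i.out + U i`, which
allows differences to be counted coset by coset. -/
noncomputable def cosetUnion (U : G ⧸ H → AddSubgroup G) : Finset G :=
  {x | x - (x : G ⧸ H).out ∈ U x}

theorem mem_cosetUnion {x : G} : x ∈ cosetUnion U ↔ x - (x : G ⧸ H).out ∈ U x :=
  mem_filter_univ x

theorem card_filter_sub_mem_cosetUnion (hU : ∀ i, U i ≤ H) (g : G) :
    #{x ∈ cosetUnion U | x - g ∈ cosetUnion U} =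
      ∑ i : G ⧸ H, #{x | x - i.out ∈ U i ∧ x - (g + (i - g).out) ∈ U (i - g)} := by
  rw [card_eq_sum_card_fiberwise (f := ((↑) : G → G ⧸ H)) (t := univ) (fun _ _ ↦ mem_univ _)]
  refine sum_congr rfl fun i _ ↦ congrArg card ?_
  ext x
  have mk_eq (hx : x - i.out ∈ U i) : (x : G ⧸ H) = i := by
    rw [← i.out_eq', eq_comm, QuotientAddGroup.eq, neg_add_eq_sub]
    exact hU i hx
  simp only [mem_filter, mem_cosetUnion, mem_univ, true_and, QuotientAddGroup.mk_sub, sub_sub]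
  constructor
  · rintro ⟨hx, rfl⟩
    exact hx
  · rintro ⟨hx, hxg⟩
    obtain rfl := mk_eq hx
    exact ⟨⟨hx, hxg⟩, rfl⟩

theorem card_filter_sub_mem_cosetUnion_of_mem (hU : ∀ i, U i ≤ H) (hg : g ∈ H) :
    #{x ∈ cosetUnion U | x - g ∈ cosetUnion U} = ∑ i with g ∈ U i, Nat.card (U i) := by
  rw [card_filter_sub_mem_cosetUnion hU, sum_filter]
  refine sum_congr rfl fun i _ ↦ ?_
  rw [(QuotientAddGroup.eq_zero_iff g).2 hg, sub_zero]
  have hsub : g + i.out - i.out = g := add_sub_cancel_right g i.out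
  split_ifs with hgi
  · rw [card_filter_sub_mem_and_sub_mem (by rwa [hsub, sup_idem]), inf_idem]
  · refine card_eq_zero.2 <| filter_eq_empty_iff.2 fun x _ hx ↦ hgi ?_
    simpa only [hsub, sup_idem] using sub_mem_sup_of_sub_mem hx.1 hx.2

theorem card_filter_sub_mem_cosetUnion_of_notMem
    (hU : Pairwise fun i j ↦ U i ⊔ U j = H) (hg : g ∉ H) :
    #{x ∈ cosetUnion U | x - g ∈ cosetUnion U} =
      ∑ i : G ⧸ H, Nat.card (U i ⊓ U (i - g) : AddSubgroup G) := by
  have hsup (i : G ⧸ H) : U i ⊔ U (i - g) = H :=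
    hU fun h ↦ hg <| (QuotientAddGroup.eq_zero_iff g).1 (sub_eq_self.1 h.symm)
  rw [card_filter_sub_mem_cosetUnion fun i ↦ le_sup_left.trans (hsup i).le]
  refine sum_congr rfl fun i _ ↦ card_filter_sub_mem_and_sub_mem ?_
  rw [hsup, ← neg_add_eq_sub, ← QuotientAddGroup.eq]
  simp

theorem card_filter_cosetUnion_sub_mem (hN : U g ⊔ N = H) :
    #{x ∈ cosetUnion U | x - g ∈ N} = Nat.card (U g ⊓ N : AddSubgroup G) := by
  have hout : g - (g : G ⧸ H).out ∈ H := by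
    rw [← neg_add_eq_sub, ← QuotientAddGroup.eq]
    simp
  rw [← card_filter_sub_mem_and_sub_mem (hN.symm.le hout)]
  congr 1
  ext x
  have mk_eq (hx : x - g ∈ N) : (x : G ⧸ H) = g := by
    rw [eq_comm, QuotientAddGroup.eq, neg_add_eq_sub]
    exact hN.le (AddSubgroup.mem_sup_right hx)
  simp only [mem_filter, mem_cosetUnion, mem_univ, true_and]
  exact and_congr_left fun hx ↦ by rw [mk_eq hx]

end CosetUnion

section Hyperplanes

variable {K V : Type*} [Field K] [AddCommGroup V] [Module K V] [FiniteDimensional K V]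
  {N U W : Submodule K V}

theorem finrank_add_one_of_isCoatom (hU : IsCoatom U) : finrank K U + 1 = finrank K V := by
  have := isSimpleModule_iff_isCoatom.2 hU
  have hquot : finrank K (V ⧸ U) = 1 := isSimpleModule_iff_finrank_eq_one.1 this
  rw [← U.finrank_quotient_add_finrank, hquot, add_comm]

theorem finrank_inf_add_one_of_isCoatom (hU : IsCoatom U) (hWU : ¬W ≤ U) :
    finrank K ↥(U ⊓ W) + 1 = finrank K W := by
  have hsup : finrank K ↥(U ⊔ W) = finrank K V := by
    rw [(hU.not_le_iff_codisjoint.1 hWU).eq_top, finrank_top]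
  have hcodim := finrank_add_one_of_isCoatom hU
  have hmod := Submodule.finrank_sup_add_finrank_inf_eq U W
  lia

theorem natCard_of_isCoatom (hU : IsCoatom U) : Nat.card U = Nat.card K ^ (finrank K V - 1) := by
  rw [natCard_eq_pow_finrank (K := K), ← finrank_add_one_of_isCoatom hU, Nat.add_sub_cancel]

theorem natCard_inf_of_isCoatom (hU : IsCoatom U) (hWU : ¬W ≤ U) :
    Nat.card ↥(U ⊓ W) = Nat.card K ^ (finrank K W - 1) := by
  rw [natCard_eq_pow_finrank (K := K), ← finrank_inf_add_one_of_isCoatom hU hWU,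
    Nat.add_sub_cancel]

variable [Finite K]

variable (K V) in
theorem natCard_subtype_isCoatom :
    Nat.card {U : Submodule K V // IsCoatom U} = ∑ i ∈ range (finrank K V), Nat.card K ^ i := by
  rw [← Projectivization.card_of_finrank K (Dual K V) Subspace.dual_finrank_eq]
  refine Nat.card_congr (.trans ?_ (Projectivization.equivSubmodule K (Dual K V)).symm)
  let e := Subspace.orderIsoFiniteDimensional (K := K) (V := V)
  refine (e.toEquiv.trans OrderDual.ofDual).subtypeEquiv fun U ↦ ?_
  rw [← Submodule.isAtom_iff_finrank_eq_one, ← isCoatom_dual_iff_isAtom]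
  exact (e.isCoatom_iff U).symm

/-- The hyperplanes of `V` not containing `N`, equivalently those with `U ⊔ N = ⊤`. Hyperplanes are
encoded as coatoms of the lattice of subspaces. -/
def transversalHyperplanes (N : Submodule K V) : Set (Submodule K V) :=
  {U | IsCoatom U ∧ ¬N ≤ U}

theorem ncard_Ici_inter_isCoatom (W : Submodule K V) :
    (Set.Ici W ∩ {U | IsCoatom U}).ncard =
      ∑ i ∈ range (finrank K (V ⧸ W)), Nat.card K ^ i := by
  rw [← natCard_subtype_isCoatom K (V ⧸ W), ← Nat.card_coe_set_eq]
  refine Nat.card_congr <| .symm <|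
    .trans ?_ (Equiv.subtypeSubtypeEquivSubtypeInter (W ≤ ·) IsCoatom)
  exact W.comapMkQRelIso.toEquiv.subtypeEquiv fun U ↦
    (Submodule.isCoatom_comap_iff W.mkQ_surjective).symm

variable (N W) in
theorem ncard_Ici_inter_transversalHyperplanes :
    (Set.Ici W ∩ transversalHyperplanes N).ncard = Nat.card K ^ finrank K (V ⧸ W ⊔ N) *
      ∑ i ∈ range (finrank K N - finrank K ↥(W ⊓ N)), Nat.card K ^ i := by
  have : Finite V := Module.finite_of_finite K
  have hinter : Set.Ici W ∩ {U | IsCoatom U} ∩ Set.Ici N =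
      Set.Ici (W ⊔ N) ∩ {U | IsCoatom U} := by
    rw [← Set.Ici_inter_Ici, Set.inter_right_comm]
  have hdiff : (Set.Ici W ∩ {U | IsCoatom U}) \ Set.Ici N =
      Set.Ici W ∩ transversalHyperplanes N := by
    ext U
    simp only [transversalHyperplanes, Set.mem_sdiff, Set.mem_inter_iff, Set.mem_Ici,
      Set.mem_ofPred_eq, and_assoc]
  have hfin : finrank K (V ⧸ W) =
      finrank K (V ⧸ W ⊔ N) + (finrank K N - finrank K ↥(W ⊓ N)) := by
    have := Submodule.finrank_sup_add_finrank_inf_eq W N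
    have := Submodule.finrank_quotient_add_finrank W
    have := Submodule.finrank_quotient_add_finrank (W ⊔ N)
    have := Submodule.finrank_mono (inf_le_right : W ⊓ N ≤ N)
    lia
  have hcount := Set.ncard_inter_add_ncard_sdiff_eq_ncard (Set.Ici W ∩ {U | IsCoatom U})
    (Set.Ici N) (Set.toFinite _)
  rw [hinter, hdiff, ncard_Ici_inter_isCoatom, ncard_Ici_inter_isCoatom, hfin, sum_range_add]
    at hcount
  simp only [pow_add, ← mul_sum] at hcount
  exact add_left_cancel hcount

variable (N) in
theorem ncard_transversalHyperplanes :
    (transversalHyperplanes N).ncard =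
      Nat.card K ^ finrank K (V ⧸ N) * ∑ i ∈ range (finrank K N), Nat.card K ^ i := by
  have := ncard_Ici_inter_transversalHyperplanes N ⊥
  rwa [bot_sup_eq, bot_inf_eq, finrank_bot, Nat.sub_zero, Set.Ici_bot, Set.univ_inter] at this

theorem ncard_sep_transversalHyperplanes_of_mem {v : V} (hv : v ∈ N) (hv₀ : v ≠ 0) :
    {U ∈ transversalHyperplanes N | v ∈ U}.ncard =
      Nat.card K ^ finrank K (V ⧸ N) * ∑ i ∈ range (finrank K N - 1), Nat.card K ^ i := by
  have hle : Submodule.span K {v} ≤ N := (Submodule.span_singleton_le_iff_mem v N).2 hv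
  have := ncard_Ici_inter_transversalHyperplanes N (Submodule.span K {v})
  rw [sup_eq_right.2 hle, inf_eq_left.2 hle, finrank_span_singleton hv₀] at this
  rw [← this]
  congr 1
  ext U
  simp [and_comm]

theorem ncard_sep_transversalHyperplanes_of_notMem {v : V} (hv : v ∉ N) :
    {U ∈ transversalHyperplanes N | v ∈ U}.ncard =
      Nat.card K ^ (finrank K (V ⧸ N) - 1) * ∑ i ∈ range (finrank K N), Nat.card K ^ i := by
  have hdisj : Submodule.span K {v} ⊓ N = ⊥ :=
    (Submodule.disjoint_span_singleton_of_notMem hv).symm.eq_bot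
  have hcodim := LinearEquiv.finrank_quotient_sup_span_singleton hv
  have := ncard_Ici_inter_transversalHyperplanes N (Submodule.span K {v})
  rw [hdisj, sup_comm, finrank_bot, Nat.sub_zero, ← Nat.sub_eq_of_eq_add hcodim.symm] at this
  rw [← this]
  congr 1
  ext U
  simp [and_comm]

end Hyperplanes

section PottSet

variable {K V G : Type*} [Field K] [AddCommGroup V] [Module K V]
  [AddCommGroup G] {φ : V →+ G} {N : Submodule K V}

theorem map_toAddSubgroup_sup_eq_range {U W : Submodule K V} (hU : IsCoatom U) (hWU : ¬W ≤ U) :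
    U.toAddSubgroup.map φ ⊔ W.toAddSubgroup.map φ = φ.range := by
  rw [← AddSubgroup.map_sup, ← Submodule.sup_toAddSubgroup,
    (hU.not_le_iff_codisjoint.1 hWU).eq_top, Submodule.top_toAddSubgroup, AddMonoidHom.range_eq_map]

variable [FiniteDimensional K V]

theorem natCard_map_toAddSubgroup_inf (hφ : Function.Injective φ) {U W : Submodule K V}
    (hU : IsCoatom U) (hWU : ¬W ≤ U) :
    Nat.card ↥(U.toAddSubgroup.map φ ⊓ W.toAddSubgroup.map φ) =
      Nat.card K ^ (finrank K W - 1) := by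
  rw [← AddSubgroup.map_inf _ _ _ hφ, AddSubgroup.card_map_of_injective hφ]
  exact natCard_inf_of_isCoatom hU hWU

theorem pow_finrank_mul_index_map (hφ : Function.Injective φ) (W : Submodule K V) :
    Nat.card K ^ finrank K W * (W.toAddSubgroup.map φ).index = Nat.card G := by
  rw [← (W.toAddSubgroup.map φ).card_mul_index, AddSubgroup.card_map_of_injective hφ]
  exact congrArg (· * _) natCard_eq_pow_finrank.symm

theorem index_map_toAddSubgroup [Finite K] (hφ : Function.Injective φ)
    (hG : Nat.card G = Nat.card K ^ (2 * finrank K V - finrank K N) *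
      ∑ i ∈ range (finrank K N), Nat.card K ^ i) :
    (N.toAddSubgroup.map φ).index = Nat.card K ^ (2 * finrank K V - 2 * finrank K N) *
      ∑ i ∈ range (finrank K N), Nat.card K ^ i := by
  have hle := N.finrank_le
  have hexp : 2 * finrank K V - finrank K N =
      finrank K N + (2 * finrank K V - 2 * finrank K N) := by lia
  have hindex := pow_finrank_mul_index_map hφ N
  rw [hG, hexp, pow_add, mul_assoc] at hindex
  exact Nat.eq_of_mul_eq_mul_left (pow_pos Nat.card_pos _) hindex

theorem nonempty_quotient_range_equiv_transversalHyperplanes [Finite K] [Finite G]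
    (hφ : Function.Injective φ)
    (hG : Nat.card G = Nat.card K ^ (2 * finrank K V - finrank K N) *
      ∑ i ∈ range (finrank K N), Nat.card K ^ i) :
    Nonempty (G ⧸ φ.range ≃ transversalHyperplanes N) := by
  have : Finite V := Module.finite_of_finite K
  have hquot := N.finrank_quotient_add_finrank
  have hexp : 2 * finrank K V - finrank K N = finrank K V + finrank K (V ⧸ N) := by lia
  have hindex := pow_finrank_mul_index_map hφ (⊤ : Submodule K V)
  rw [Submodule.top_toAddSubgroup, ← AddMonoidHom.range_eq_map, finrank_top, hG, hexp, pow_add,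
    mul_assoc, ← ncard_transversalHyperplanes] at hindex
  have hcard := Nat.eq_of_mul_eq_mul_left (pow_pos Nat.card_pos _) hindex
  rw [← Nat.card_coe_set_eq] at hcard
  exact Finite.card_eq.1 hcard

variable [Fintype G]

/-- Pott's divisible difference set relative to the image of `N`: the hyperplanes of `V` not
containing `N` are embedded into `G` by `φ` and then translated into pairwise distinct cosets of
`φ.range`, the bijection `σ` prescribing which hyperplane goes to which coset. -/
noncomputable def pottSet (σ : G ⧸ φ.range ≃ transversalHyperplanes N) : Finset G :=
  cosetUnion fun i ↦ (σ i : Submodule K V).toAddSubgroup.map φ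

variable (hφ : Function.Injective φ) (σ : G ⧸ φ.range ≃ transversalHyperplanes N) {g : G}
include hφ

theorem card_filter_sub_mem_pottSet (v : V) :
    #{x ∈ pottSet σ | x - φ v ∈ pottSet σ} =
      {U ∈ transversalHyperplanes N | v ∈ U}.ncard * Nat.card K ^ (finrank K V - 1) := by
  have hcard (i : G ⧸ φ.range) : Nat.card ((σ i : Submodule K V).toAddSubgroup.map φ) =
      Nat.card K ^ (finrank K V - 1) :=
    (AddSubgroup.card_map_of_injective hφ).trans (natCard_of_isCoatom (σ i).2.1)
  have hmem (i : G ⧸ φ.range) : φ v ∈ (σ i : Submodule K V).toAddSubgroup.map φ ↔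
      v ∈ (σ i : Submodule K V) := AddSubgroup.mem_map_iff_mem hφ
  have hcount : #{i | v ∈ (σ i : Submodule K V)} =
      {U ∈ transversalHyperplanes N | v ∈ U}.ncard := by
    rw [← Set.ncard_coe_finset, coe_filter_univ]
    refine Set.ncard_congr (fun i _ ↦ σ i) (fun i hi ↦ ⟨(σ i).2, hi⟩)
      (fun i j _ _ h ↦ σ.injective (Subtype.ext h)) fun U hU ↦ ?_
    exact ⟨σ.symm ⟨U, hU.1⟩, by simpa using hU.2, by simp⟩
  rw [pottSet, card_filter_sub_mem_cosetUnion_of_mem (fun _ ↦ AddSubgroup.map_le_range φ _)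
    (AddMonoidHom.mem_range.2 ⟨v, rfl⟩)]
  simp only [hcard, hmem, sum_const, smul_eq_mul, hcount]

theorem card_filter_sub_mem_pottSet_of_notMem_range (hg : g ∉ φ.range) :
    #{x ∈ pottSet σ | x - g ∈ pottSet σ} =
      (transversalHyperplanes N).ncard * Nat.card K ^ (finrank K V - 2) := by
  have not_le {i j : G ⧸ φ.range} (hij : i ≠ j) : ¬(σ j : Submodule K V) ≤ σ i := fun hle ↦
    hij <| σ.injective <| Subtype.ext <| ((σ j).2.1.le_iff_eq (σ i).2.1.1).1 hle
  rw [pottSet, card_filter_sub_mem_cosetUnion_of_notMem (fun i j hij ↦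
    map_toAddSubgroup_sup_eq_range (σ i).2.1 (not_le hij)) hg]
  have hcard (i : G ⧸ φ.range) :
      Nat.card ↥((σ i : Submodule K V).toAddSubgroup.map φ ⊓
        (σ (i - g) : Submodule K V).toAddSubgroup.map φ) = Nat.card K ^ (finrank K V - 2) := by
    have hne : i ≠ i - g := fun h ↦ hg <| (QuotientAddGroup.eq_zero_iff g).1 (sub_eq_self.1 h.symm)
    rw [natCard_map_toAddSubgroup_inf hφ (σ i).2.1 (not_le hne),
      ← finrank_add_one_of_isCoatom (σ (i - g)).2.1, Nat.add_sub_add_right]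
  simp only [hcard, sum_const, smul_eq_mul, card_univ, ← Nat.card_eq_fintype_card, Nat.card_congr σ,
    Nat.card_coe_set_eq]

theorem card_filter_pottSet_sub_mem (g : G) :
    #{x ∈ pottSet σ | x - g ∈ N.toAddSubgroup.map φ} = Nat.card K ^ (finrank K N - 1) := by
  have hσ : IsCoatom (σ g).1 ∧ ¬N ≤ (σ g).1 := (σ g).2
  rw [← natCard_map_toAddSubgroup_inf hφ hσ.1 hσ.2]
  exact card_filter_cosetUnion_sub_mem (map_toAddSubgroup_sup_eq_range hσ.1 hσ.2)

variable [Finite K]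

theorem card_pottSet (hV : 1 ≤ finrank K V) :
    #(pottSet σ) = Nat.card K ^ (2 * finrank K V - finrank K N - 1) *
      ∑ i ∈ range (finrank K N), Nat.card K ^ i := by
  have hcount := card_filter_sub_mem_pottSet hφ σ 0
  have hquot := N.finrank_quotient_add_finrank
  simp only [map_zero, sub_zero, filter_mem_eq_inter, inter_self, zero_mem, and_true,
    Set.ofPred_mem_eq] at hcount
  rw [hcount, ncard_transversalHyperplanes, mul_right_comm, ← pow_add]
  congr 2
  lia

theorem card_filter_sub_mem_pottSet_of_mem_map (hg : g ∈ N.toAddSubgroup.map φ) (hg₀ : g ≠ 0) :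
    #{x ∈ pottSet σ | x - g ∈ pottSet σ} =
      Nat.card K ^ (2 * finrank K V - finrank K N - 1) *
        ∑ i ∈ range (finrank K N - 1), Nat.card K ^ i := by
  obtain ⟨v, hv, rfl⟩ := hg
  have hv₀ : v ≠ 0 := fun h ↦ hg₀ (h ▸ map_zero φ)
  have hpos : 0 < finrank K V := finrank_pos_iff_exists_ne_zero.2 ⟨v, hv₀⟩
  have hquot := N.finrank_quotient_add_finrank
  rw [card_filter_sub_mem_pottSet hφ, ncard_sep_transversalHyperplanes_of_mem hv hv₀,
    mul_right_comm, ← pow_add]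
  congr 2
  lia

theorem card_filter_sub_mem_pottSet_of_notMem_map (hV : 2 ≤ finrank K V)
    (hg : g ∉ N.toAddSubgroup.map φ) :
    #{x ∈ pottSet σ | x - g ∈ pottSet σ} =
      Nat.card K ^ (2 * finrank K V - finrank K N - 2) *
        ∑ i ∈ range (finrank K N), Nat.card K ^ i := by
  have hquot := N.finrank_quotient_add_finrank
  by_cases hgφ : g ∈ φ.range
  · obtain ⟨v, rfl⟩ := hgφ
    have hv : v ∉ N := fun hv ↦ hg ⟨v, hv, rfl⟩
    have hpos : 0 < finrank K (V ⧸ N) :=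
      finrank_pos_iff_exists_ne_zero.2 ⟨N.mkQ v, mt (Submodule.Quotient.mk_eq_zero N).1 hv⟩
    rw [card_filter_sub_mem_pottSet hφ, ncard_sep_transversalHyperplanes_of_notMem hv,
      mul_right_comm, ← pow_add]
    congr 2
    lia
  · rw [card_filter_sub_mem_pottSet_of_notMem_range hφ σ hgφ, ncard_transversalHyperplanes,
      mul_right_comm, ← pow_add]
    congr 2
    lia

end PottSet

theorem exists_submodule_finrank_eq {K V : Type*} [DivisionRing K] [AddCommGroup V] [Module K V]
    {n : ℕ} (hn : n ≤ finrank K V) : ∃ W : Submodule K V, finrank K W = n := by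
  obtain ⟨b, hb⟩ := exists_linearIndependent_of_le_finrank hn
  exact ⟨Submodule.span K (Set.range b), (finrank_span_eq_card hb).trans (Fintype.card_fin n)⟩

theorem nonempty_addEquiv_pi_galoisField (p : ℕ) [Fact p.Prime] {e : ℕ} (he : e ≠ 0) (r : ℕ) :
    Nonempty ((Fin r → GaloisField p e) ≃+ (Fin (e * r) → ZMod p)) := by
  refine ⟨(LinearEquiv.ofFinrankEq (R := ZMod p) _ _ ?_).toAddEquiv⟩
  rw [finrank_pi_fintype, finrank_fin_fun, sum_const, GaloisField.finrank p he, card_univ,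
    Fintype.card_fin, smul_eq_mul, mul_comm]

/-- (Pott's construction) for `q = p^e` a prime power and `r ≥ s ≥ 1`
with `2r ≥ s + 2`, every finite abelian group `G` of order
`q^(2r−s)·(q^s−1)/(q−1)` containing an elementary abelian subgroup of order `q^r`
possesses a divisible difference set `D` relative to a subgroup `N` of order `q^s`,
satisfying the intersection condition, with parameters
`m = q^(2r−2s)·(q^s−1)/(q−1)`, `n = q^s`, `k = q^(2r−s−1)·(q^s−1)/(q−1)`,
`λ1 = q^(2r−s−1)·(q^(s−1)−1)/(q−1)`, `λ2 = q^(2r−s−2)·(q^s−1)/(q−1)`;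
moreover `|D ∩ (N + g)| = q^(s−1)` for all `g`. -/
theorem dds_of_elementary_abelian_subgroup
    (p : ℕ) (hp : p.Prime) (e : ℕ) (he : 1 ≤ e) (q : ℕ) (hq : q = p ^ e)
    (r s : ℕ) (hs : 1 ≤ s) (hsr : s ≤ r) (h2r : s + 2 ≤ 2 * r)
    (G : Type*) [AddCommGroup G] [Fintype G] [DecidableEq G]
    (hcard : Fintype.card G = q ^ (2 * r - s) * ((q ^ s - 1) / (q - 1)))
    (hsub : ∃ H : AddSubgroup G, Nonempty (H ≃+ (Fin (e * r) → ZMod p))) :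
    ∃ (N : AddSubgroup G) (D : Finset G),
      Nat.card N = q ^ s ∧
      N.index = q ^ (2 * r - 2 * s) * ((q ^ s - 1) / (q - 1)) ∧
      D.Nonempty ∧
      D.card = q ^ (2 * r - s - 1) * ((q ^ s - 1) / (q - 1)) ∧
      (∀ g : G, g ≠ 0 →
        ((D ×ˢ D).filter (fun pr => pr.1 - pr.2 = g)).card
          = if g ∈ N then q ^ (2 * r - s - 1) * ((q ^ (s - 1) - 1) / (q - 1))
            else q ^ (2 * r - s - 2) * ((q ^ s - 1) / (q - 1))) ∧
      (∀ g : G, (D.filter (fun x => x - g ∈ N)).card = q ^ (s - 1)) := by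
  have : Fact p.Prime := ⟨hp⟩
  have he₀ : e ≠ 0 := Nat.one_le_iff_ne_zero.1 he
  obtain ⟨H, ⟨f⟩⟩ := hsub
  obtain ⟨L⟩ := nonempty_addEquiv_pi_galoisField p he₀ r
  let φ : (Fin r → GaloisField p e) →+ G := H.subtype.comp (L.trans f.symm).toAddMonoidHom
  have hφ : Function.Injective φ := H.subtype_injective.comp (L.trans f.symm).injective
  have hr : finrank (GaloisField p e) (Fin r → GaloisField p e) = r := finrank_fin_fun _
  obtain rfl : q = Nat.card (GaloisField p e) := hq.trans (GaloisField.card p e he₀).symm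
  rw [← hr] at hsr h2r hcard ⊢
  obtain ⟨N, rfl⟩ := exists_submodule_finrank_eq hsr
  simp only [← Nat.geomSum_eq (Finite.one_lt_card (α := GaloisField p e)),
    ← Nat.card_eq_fintype_card] at hcard ⊢
  obtain ⟨σ⟩ := nonempty_quotient_range_equiv_transversalHyperplanes hφ hcard
  refine ⟨N.toAddSubgroup.map φ, pottSet σ, ?_, index_map_toAddSubgroup hφ hcard, ?_,
    card_pottSet hφ σ (by lia), fun g hg ↦ ?_, card_filter_pottSet_sub_mem hφ σ⟩
  · rw [AddSubgroup.card_map_of_injective hφ]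
    exact natCard_eq_pow_finrank (V := N)
  · have hcoset := card_filter_pottSet_sub_mem hφ σ 0
    exact (card_pos.1 (hcoset ▸ pow_pos Nat.card_pos _)).mono (filter_subset _ _)
  · rw [card_filter_product_sub_eq]
    split_ifs with hgN
    · convert card_filter_sub_mem_pottSet_of_mem_map hφ σ hgN hg
    · convert card_filter_sub_mem_pottSet_of_notMem_map hφ σ (by lia) hgN
end

section
/- Let A be a finite abelian group, N ≤ A a proper nontrivial subgroup, and D ⊆ A a divisible difference set relative to N with parameters (m,n,k,λ1,λ2), m, n > 1, satisfying the intersection condition and with k ≤ mn−k; put k_3 = k and k_4 = mn−k. Suppose (as rationals) 1/k + 1/(mn−k) = 1/(n−1) − 1/n, and (m,n,k) ≠ (4,2,4). Let G = Dih(A) with reflecting element b, X2 = A\N, X3 = Db, X4 = (A\D)b. Then for each i ∈ {3,4}, the Cayley graph Cay(G, X2 ∪ X_i) is a proper divisible design graph with parameters v' = 2mn, k' = n(m−1) + k_i, λ1' = n(m−1) + k_i(k_i − m)/((n−1)m), λ2' = 2(m−1)k_i/m, m' = 2, n' = mn, whose canonical partition is into the two cosets A and Ab of A in G. -/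
open Classical

/-!
Write `X = ι(A \ N) ∪ ι(E)b`. In `Dih(A)` the autocorrelation of `X` at `a ∈ A` is the sum of those
of `A \ N` and `E` at `a`, and at `ab` it is twice the correlation of `E` with `A \ N`, which is
constant by the intersection condition. Off the identity the autocorrelation of `A \ N` drops by `n`
outside `N`, so `X` is a divisible difference set relative to `A` as soon as `λ2 = λ1 + n`. With
`μ = |E ∩ Ng|`, double counting gives `k = mμ`, `mμ + (n - 1)λ1 = mμ²` and `nλ2 = mμ²`, so that
`n(n - 1)(λ2 - λ1) = mμ(n - μ)`, and Eq. (1), in the form `k(mn - k) = mn²(n - 1)`, says precisely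
that `λ2 - λ1 = n`. If also `λ1' = λ2'`, then `m(n - μ) = 2n` and `2μ = n(n - 1)`, hence
`m(3 - n) = 4`, which leaves only `(m, n, k) = (4, 2, 4)`. Since Eq. (1) is symmetric in `k` and
`mn - k`, all this applies to `E = D` and to `E = A \ D`.
-/

section Correlation

variable {G : Type*} [Group G]

/-- The correlation of `S` and `T` at `g`, that is `|S ∩ Tg|`. For abelian `G` it is the number of
representations `g = s * t⁻¹` with `s ∈ S` and `t ∈ T`. -/
noncomputable def correlation (S T : Set G) (g : G) : ℕ :=
  {x | x ∈ S ∧ x * g⁻¹ ∈ T}.ncard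

theorem natCard_mul_right_mem (S : Set G) (g : G) : Nat.card {x // x * g ∈ S} = S.ncard :=
  Nat.card_congr ((Equiv.mulRight g).subtypeEquiv fun _ => Iff.rfl)

@[simp]
theorem correlation_one_self (S : Set G) : correlation S S 1 = S.ncard := by
  simp [correlation]

@[simp]
theorem correlation_univ_right (S : Set G) (g : G) : correlation S Set.univ g = S.ncard := by
  simp [correlation]

theorem natCard_translates_eq_correlation (S T : Set G) (g h : G) :
    Nat.card {x // x * g⁻¹ ∈ S ∧ x * h⁻¹ ∈ T} = correlation S T (h * g⁻¹) :=
  Nat.card_congr ((Equiv.mulRight g⁻¹).subtypeEquiv fun x => by simp)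

theorem correlation_inv (S T : Set G) (g : G) : correlation S T g⁻¹ = correlation T S g := by
  refine Nat.card_congr ((Equiv.mulRight g).subtypeEquiv fun x => ?_)
  simp [and_comm]

theorem natCard_div_eq_correlation {A : Type*} [CommGroup A] (S T : Set A) (g : A) :
    Nat.card {p : A × A // p.1 ∈ S ∧ p.2 ∈ T ∧ p.1 * p.2⁻¹ = g} = correlation S T g := by
  have snd_eq {p : A × A} (hp : p.1 * p.2⁻¹ = g) : p.1 * g⁻¹ = p.2 := by simp [← hp]
  exact Nat.card_congr
    { toFun := fun p => ⟨p.1.1, p.2.1, by rw [snd_eq p.2.2.2]; exact p.2.2.1⟩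
      invFun := fun x => ⟨(x.1, x.1 * g⁻¹), x.2.1, x.2.2, by simp⟩
      left_inv := fun p => Subtype.ext (Prod.ext rfl (snd_eq p.2.2.2))
      right_inv := fun _ => rfl }

theorem correlation_add_compl_right [Finite G] (S T : Set G) (g : G) :
    correlation S T g + correlation S Tᶜ g = S.ncard :=
  Set.ncard_inter_add_ncard_sdiff_eq_ncard S {x | x * g⁻¹ ∈ T}

theorem correlation_add_compl_left [Finite G] (S T : Set G) (g : G) :
    correlation S T g + correlation Sᶜ T g = T.ncard := by
  simpa only [inv_inv, correlation_inv] using correlation_add_compl_right T S g⁻¹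

theorem correlation_compl_compl [Finite G] (S T : Set G) (g : G) :
    correlation Sᶜ Tᶜ g + (S.ncard + T.ncard) = Nat.card G + correlation S T g := by
  have hT := correlation_add_compl_left S T g
  have hS := correlation_add_compl_right Sᶜ T g
  have hG := Set.ncard_add_ncard_compl S
  omega

theorem correlation_subgroup (N : Subgroup G) (g : G) :
    correlation (N : Set G) N g = if g ∈ N then Nat.card N else 0 := by
  split_ifs with hg
  · exact congrArg Set.ncard
      (Set.ext fun x => and_iff_left_of_imp fun hx => N.mul_mem hx (N.inv_mem hg))
  · have hempty : {x | x ∈ (N : Set G) ∧ x * g⁻¹ ∈ (N : Set G)} = ∅ :=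
      Set.eq_empty_of_forall_notMem fun x ⟨hx, hxg⟩ =>
        hg (inv_mem_iff.mp ((N.mul_mem_cancel_left hx).mp hxg))
    rw [correlation, hempty, Set.ncard_empty]

theorem card_filter_mem_eq_ncard {α : Type*} [Fintype α] (s : Set α)
    [DecidablePred (· ∈ s)] :
    (Finset.univ.filter (· ∈ s)).card = s.ncard := by
  rw [← Set.ncard_coe_finset]
  simp

theorem sum_correlation_comm {A : Type*} [CommGroup A] [Fintype A] (S T U : Set A)
    [DecidablePred (· ∈ T)] [DecidablePred (· ∈ U)] :
    ∑ g with g ∈ U, correlation S T g = ∑ t with t ∈ T, correlation S U t := by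
  have expand (V W : Set A) [DecidablePred (· ∈ V)] : ∑ g with g ∈ V, correlation S W g
      = ∑ x, ∑ g, if x ∈ S ∧ g ∈ V ∧ x / g ∈ W then 1 else 0 := by
    rw [Finset.sum_comm, Finset.sum_filter]
    refine Finset.sum_congr rfl fun g _ => ?_
    rw [correlation, ← card_filter_mem_eq_ncard, Finset.card_filter]
    split_ifs with hg
    · simp only [hg, true_and, Set.mem_ofPred, div_eq_mul_inv]
    · simp only [hg, false_and, and_false, if_false, Finset.sum_const_zero]
  rw [expand, expand]
  refine Finset.sum_congr rfl fun x _ => Fintype.sum_equiv (Equiv.divLeft x) _ _ fun g => ?_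
  simp only [Equiv.divLeft_apply, div_div_cancel, and_comm (a := g ∈ U)]

end Correlation

section DivisibleDifferenceSet

/-- `D` is a divisible difference set relative to `N`, with `λ1 = l₁` and `λ2 = l₂`; the remaining
parameters are `N.index`, `Nat.card N` and `D.ncard`. -/
def IsDivisibleDifferenceSet {G : Type*} [Group G] (N : Subgroup G) (D : Set G) (l₁ l₂ : ℕ) :
    Prop :=
  ∀ g ≠ 1, correlation D D g = if g ∈ N then l₁ else l₂

/-- The intersection condition: `|D ∩ Ng| = μ` for every coset `Ng`. -/
def MeetsCosetsIn {G : Type*} [Group G] (N : Subgroup G) (D : Set G) (μ : ℕ) : Prop :=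
  ∀ g, correlation D N g = μ

theorem natCard_mul_index_sub_one_add {G : Type*} [Group G] (N : Subgroup G) [N.FiniteIndex] :
    Nat.card N * (N.index - 1) + Nat.card N = Nat.card G := by
  rw [← N.card_mul_index, ← Nat.mul_add_one, Nat.sub_one_add_one Subgroup.FiniteIndex.index_ne_zero]

theorem ncard_compl_subgroup {G : Type*} [Group G] [Finite G] (N : Subgroup G) :
    (N : Set G)ᶜ.ncard = Nat.card N * (N.index - 1) := by
  have hadd : Nat.card N + (N : Set G)ᶜ.ncard = Nat.card G := Set.ncard_add_ncard_compl _
  have := natCard_mul_index_sub_one_add N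
  omega

theorem IsDivisibleDifferenceSet.compl {G : Type*} [Group G] [Finite G] {N : Subgroup G} {D : Set G}
    {l₁ l₂ : ℕ} (hD : IsDivisibleDifferenceSet N D l₁ l₂) :
    IsDivisibleDifferenceSet N Dᶜ (Nat.card G + l₁ - 2 * D.ncard)
      (Nat.card G + l₂ - 2 * D.ncard) := by
  intro g hg
  have h := correlation_compl_compl D D g
  rw [hD g hg] at h
  split_ifs at h ⊢ <;> omega

theorem MeetsCosetsIn.compl {G : Type*} [Group G] [Finite G] {N : Subgroup G} {D : Set G} {μ : ℕ}
    (hμ : MeetsCosetsIn N D μ) : MeetsCosetsIn N Dᶜ (Nat.card N - μ) := by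
  intro g
  have h : _ = Nat.card N := correlation_add_compl_left D N g
  rw [hμ g] at h
  omega

theorem IsDivisibleDifferenceSet.sum_correlation_subgroup {G : Type*} [Group G] [Fintype G]
    {N : Subgroup G} {D : Set G} {l₁ l₂ : ℕ} (hD : IsDivisibleDifferenceSet N D l₁ l₂) :
    ∑ g with g ∈ (N : Set G), correlation D D g = D.ncard + (Nat.card N - 1) * l₁ := by
  have hone : (1 : G) ∈ Finset.univ.filter (· ∈ (N : Set G)) := by simp [N.one_mem]
  have hcard : (Finset.univ.filter (· ∈ (N : Set G))).card = Nat.card N :=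
    card_filter_mem_eq_ncard (N : Set G)
  have hoff : ∀ g ∈ (Finset.univ.filter (· ∈ (N : Set G))).erase 1, correlation D D g = l₁ := by
    intro g hg
    obtain ⟨hg₁, hgN⟩ := Finset.mem_erase.mp hg
    rw [hD g hg₁]
    exact if_pos (Finset.mem_filter.mp hgN).2
  rw [← Finset.add_sum_erase _ _ hone, correlation_one_self, Finset.sum_eq_card_nsmul hoff,
    Finset.card_erase_of_mem hone, hcard, smul_eq_mul]

theorem IsDivisibleDifferenceSet.sum_correlation_compl_subgroup {G : Type*} [Group G] [Fintype G]
    {N : Subgroup G} {D : Set G} {l₁ l₂ : ℕ} (hD : IsDivisibleDifferenceSet N D l₁ l₂) :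
    ∑ g with g ∈ (N : Set G)ᶜ, correlation D D g = Nat.card N * (N.index - 1) * l₂ := by
  have hoff : ∀ g ∈ Finset.univ.filter (· ∈ (N : Set G)ᶜ), correlation D D g = l₂ := by
    intro g hg
    have hgN : g ∉ N := (Finset.mem_filter.mp hg).2
    rw [hD g (ne_of_mem_of_not_mem N.one_mem hgN).symm, if_neg hgN]
  rw [Finset.sum_eq_card_nsmul hoff, card_filter_mem_eq_ncard, ncard_compl_subgroup, smul_eq_mul]

variable {A : Type*} [CommGroup A] [Finite A] {N : Subgroup A} {D : Set A} {μ l₁ l₂ : ℕ}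

theorem MeetsCosetsIn.ncard_eq (hμ : MeetsCosetsIn N D μ) : D.ncard = N.index * μ := by
  have := Fintype.ofFinite A
  have hcount : Nat.card N * N.index * μ = Nat.card N * D.ncard := by
    have h := sum_correlation_comm D N Set.univ
    simp only [hμ _, correlation_univ_right, Finset.sum_const, card_filter_mem_eq_ncard,
      Set.ncard_univ, smul_eq_mul] at h
    rwa [N.card_mul_index]
  exact (Nat.eq_of_mul_eq_mul_left Nat.card_pos ((mul_assoc _ _ _).symm.trans hcount)).symm

theorem MeetsCosetsIn.correlation_compl (hμ : MeetsCosetsIn N D μ) (g : A) :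
    correlation D (N : Set A)ᶜ g = (N.index - 1) * μ := by
  have h := correlation_add_compl_right D N g
  rw [hμ g, hμ.ncard_eq] at h
  rw [Nat.sub_one_mul]
  omega

theorem IsDivisibleDifferenceSet.index_mul_add_mul_lambda_one
    (hD : IsDivisibleDifferenceSet N D l₁ l₂) (hμ : MeetsCosetsIn N D μ) :
    N.index * μ + (Nat.card N - 1) * l₁ = N.index * μ ^ 2 := by
  have := Fintype.ofFinite A
  have h := sum_correlation_comm D D N
  simp only [hD.sum_correlation_subgroup, hμ _, Finset.sum_const, card_filter_mem_eq_ncard,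
    smul_eq_mul, hμ.ncard_eq] at h
  linarith

theorem IsDivisibleDifferenceSet.natCard_mul_lambda_two
    (hD : IsDivisibleDifferenceSet N D l₁ l₂) (hμ : MeetsCosetsIn N D μ) (hN : 1 < N.index) :
    Nat.card N * l₂ = N.index * μ ^ 2 := by
  have := Fintype.ofFinite A
  have h := sum_correlation_comm D D (N : Set A)ᶜ
  simp only [hD.sum_correlation_compl_subgroup, hμ.correlation_compl, Finset.sum_const,
    card_filter_mem_eq_ncard, smul_eq_mul, hμ.ncard_eq] at h
  refine Nat.eq_of_mul_eq_mul_right (Nat.sub_pos_of_lt hN) ?_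
  linarith

theorem IsDivisibleDifferenceSet.cast_lambda_one (hD : IsDivisibleDifferenceSet N D l₁ l₂)
    (hμ : MeetsCosetsIn N D μ) (hN : 1 < Nat.card N) :
    (l₁ : ℚ) = D.ncard * (D.ncard - N.index) / ((Nat.card N - 1) * N.index) := by
  have hm : (N.index : ℚ) ≠ 0 := by exact_mod_cast Subgroup.FiniteIndex.index_ne_zero
  have hn : (Nat.card N : ℚ) - 1 ≠ 0 := sub_ne_zero_of_ne (by exact_mod_cast hN.ne')
  have h : (_ : ℚ) = _ := congrArg Nat.cast (hD.index_mul_add_mul_lambda_one hμ)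
  push_cast [Nat.cast_sub hN.le] at h
  rw [hμ.ncard_eq, eq_div_iff (mul_ne_zero hn hm)]
  push_cast
  linear_combination (N.index : ℚ) * h

theorem IsDivisibleDifferenceSet.mul_lambda_two_sub_lambda_one
    (hD : IsDivisibleDifferenceSet N D l₁ l₂) (hμ : MeetsCosetsIn N D μ) (hN : 1 < N.index) :
    (Nat.card N * (Nat.card N - 1) * (l₂ - l₁) : ℤ) = N.index * μ * (Nat.card N - μ) := by
  have h₁ : (_ : ℤ) = _ := congrArg Nat.cast (hD.index_mul_add_mul_lambda_one hμ)
  have h₂ : (_ : ℤ) = _ := congrArg Nat.cast (hD.natCard_mul_lambda_two hμ hN)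
  push_cast [Nat.cast_sub (Nat.card_pos (α := N))] at h₁ h₂
  linear_combination (Nat.card N - 1 : ℤ) * h₂ - (Nat.card N : ℤ) * h₁

theorem MeetsCosetsIn.index_mul_mul_sub (hμ : MeetsCosetsIn N D μ)
    (hprod : D.ncard * Dᶜ.ncard = N.index * Nat.card N ^ 2 * (Nat.card N - 1)) :
    (N.index * μ * (Nat.card N - μ) : ℤ) = Nat.card N ^ 2 * (Nat.card N - 1) := by
  have hm : (N.index : ℤ) ≠ 0 := by exact_mod_cast Subgroup.FiniteIndex.index_ne_zero
  have hcompl : (D.ncard + Dᶜ.ncard : ℤ) = Nat.card N * N.index := by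
    exact_mod_cast (Set.ncard_add_ncard_compl D).trans N.card_mul_index.symm
  have hprod' : (_ : ℤ) = _ := congrArg Nat.cast hprod
  rw [hμ.ncard_eq] at hprod' hcompl
  push_cast [Nat.cast_sub (Nat.card_pos (α := N))] at hprod' hcompl
  refine mul_left_cancel₀ hm ?_
  linear_combination hprod' - (N.index * μ : ℤ) * hcompl

theorem IsDivisibleDifferenceSet.lambda_two_eq_lambda_one_add
    (hD : IsDivisibleDifferenceSet N D l₁ l₂) (hμ : MeetsCosetsIn N D μ)
    (hm : 1 < N.index) (hn : 1 < Nat.card N)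
    (hprod : D.ncard * Dᶜ.ncard = N.index * Nat.card N ^ 2 * (Nat.card N - 1)) :
    l₂ = l₁ + Nat.card N := by
  have hdiff := hD.mul_lambda_two_sub_lambda_one hμ hm
  rw [hμ.index_mul_mul_sub hprod] at hdiff
  have hn₀ : (Nat.card N * (Nat.card N - 1) : ℤ) ≠ 0 :=
    mul_ne_zero (by omega) (by omega)
  have h : (l₂ - l₁ : ℤ) = Nat.card N := mul_left_cancel₀ hn₀ (by linear_combination hdiff)
  omega

theorem IsDivisibleDifferenceSet.eq_four_two_four_of_lambda_eq
    (hD : IsDivisibleDifferenceSet N D l₁ l₂) (hμ : MeetsCosetsIn N D μ)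
    (hm : 1 < N.index) (hn : 1 < Nat.card N)
    (hprod : D.ncard * Dᶜ.ncard = N.index * Nat.card N ^ 2 * (Nat.card N - 1))
    (heq : Nat.card N * (N.index - 1) + l₁ = 2 * (N.index - 1) * μ) :
    N.index = 4 ∧ Nat.card N = 2 ∧ D.ncard = 4 := by
  have hl : (l₂ : ℤ) = l₁ + Nat.card N := by
    exact_mod_cast hD.lambda_two_eq_lambda_one_add hμ hm hn hprod
  have hl₂ : (_ : ℤ) = _ := congrArg Nat.cast (hD.natCard_mul_lambda_two hμ hm)
  have heq' : (_ : ℤ) = _ := congrArg Nat.cast heq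
  have hquad := hμ.index_mul_mul_sub hprod
  have hk := hμ.ncard_eq
  push_cast [Nat.cast_sub hm.le] at hl₂ heq'
  generalize N.index = m, Nat.card N = n at *
  have hn₀ : (n : ℤ) ≠ 0 := by omega
  have hnμ : (n - μ : ℤ) ≠ 0 := by
    intro h
    rw [h, mul_zero] at hquad
    exact mul_ne_zero (pow_ne_zero 2 hn₀) (by omega) hquad.symm
  have hlin : (m * (n - μ) : ℤ) = 2 * n :=
    mul_left_cancel₀ hnμ (by linear_combination (n : ℤ) * heq' - hl₂ + n * hl)
  have hμ₂ : (2 * μ : ℤ) = n * (n - 1) :=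
    mul_left_cancel₀ hn₀ (by linear_combination hquad - (μ : ℤ) * hlin)
  have hmn : (m * (3 - n) : ℤ) = 4 :=
    mul_left_cancel₀ hn₀ (by linear_combination 2 * hlin + (m : ℤ) * hμ₂)
  have hn₂ : n = 2 := by
    by_contra hne
    have : (3 : ℤ) ≤ n := by omega
    nlinarith
  subst hn₂
  obtain ⟨rfl, rfl⟩ : m = 4 ∧ μ = 1 := by omega
  exact ⟨rfl, rfl, hk⟩

end DivisibleDifferenceSet

section EquationOne

theorem mul_eq_of_one_div_add_one_div {k k' m n : ℕ} (hk : k ≠ 0) (hk' : k' ≠ 0) (hn : 1 < n)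
    (hadd : k + k' = m * n)
    (heq : 1 / (k : ℚ) + 1 / (k' : ℚ) = 1 / ((n : ℚ) - 1) - 1 / (n : ℚ)) :
    k * k' = m * n ^ 2 * (n - 1) := by
  have hn₀ : (n : ℚ) ≠ 0 := by positivity
  have hn₁ : (n : ℚ) - 1 ≠ 0 := sub_ne_zero_of_ne (by exact_mod_cast hn.ne')
  have hadd' : (k + k' : ℚ) = m * n := by exact_mod_cast hadd
  field_simp at heq
  have hmul : (k * k' : ℚ) = m * n ^ 2 * (n - 1) := by
    linear_combination n * (n - 1) * hadd' - heq
  rw [← Nat.cast_pred (zero_lt_one.trans hn)] at hmul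
  exact_mod_cast hmul

/-- `D` is a divisible difference set relative to `N`, with the intersection condition, whose
parameters `m, n > 1` and `k` are not `(4, 2, 4)` and satisfy Eq. (1), written without denominators
as `k(mn - k) = mn²(n - 1)`. This class is closed under complement. -/
structure SatisfiesEqOne {A : Type*} [CommGroup A] (N : Subgroup A) (D : Set A) : Prop where
  one_lt_index : 1 < N.index
  one_lt_natCard : 1 < Nat.card N
  isDivisibleDifferenceSet : ∃ l₁ l₂, IsDivisibleDifferenceSet N D l₁ l₂
  meetsCosetsIn : ∃ μ, MeetsCosetsIn N D μ
  ncard_mul_ncard_compl : D.ncard * Dᶜ.ncard = N.index * Nat.card N ^ 2 * (Nat.card N - 1)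
  ne_four_two_four : ¬(N.index = 4 ∧ Nat.card N = 2 ∧ D.ncard = 4)

theorem SatisfiesEqOne.compl {A : Type*} [CommGroup A] [Finite A] {N : Subgroup A} {D : Set A}
    (hD : SatisfiesEqOne N D) : SatisfiesEqOne N Dᶜ where
  one_lt_index := hD.one_lt_index
  one_lt_natCard := hD.one_lt_natCard
  isDivisibleDifferenceSet :=
    let ⟨_, _, h⟩ := hD.isDivisibleDifferenceSet
    ⟨_, _, h.compl⟩
  meetsCosetsIn :=
    let ⟨_, h⟩ := hD.meetsCosetsIn
    ⟨_, h.compl⟩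
  ncard_mul_ncard_compl := by rw [compl_compl, mul_comm, hD.ncard_mul_ncard_compl]
  ne_four_two_four := by
    rintro ⟨hm, hn, hk⟩
    have hcard : D.ncard + Dᶜ.ncard = N.index * Nat.card N :=
      (Set.ncard_add_ncard_compl D).trans N.index_mul_card.symm
    rw [hm, hn, hk] at hcard
    exact hD.ne_four_two_four ⟨hm, hn, by omega⟩

end EquationOne

section CayleyGraph

/-- The Cayley graph of `X` is a `k`-regular divisible design graph with `λ1' = L₁` and `λ2' = L₂`,
for the partition into right cosets of `H`. -/
structure IsDivisibleDesignCayley {G : Type*} [Group G] (H : Subgroup G) (X : Set G)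
    (k L₁ L₂ : ℕ) : Prop where
  inv_eq : X⁻¹ = X
  one_notMem : 1 ∉ X
  natCard_neighbors (g : G) : Nat.card {x // x * g⁻¹ ∈ X} = k
  natCard_common_neighbors (g h : G) (hgh : g ≠ h) :
    Nat.card {x // x * g⁻¹ ∈ X ∧ x * h⁻¹ ∈ X} = if g * h⁻¹ ∈ H then L₁ else L₂

theorem IsDivisibleDifferenceSet.isDivisibleDesignCayley {G : Type*} [Group G] {H : Subgroup G}
    {X : Set G} {L₁ L₂ : ℕ} (hX : IsDivisibleDifferenceSet H X L₁ L₂) (hinv : X⁻¹ = X)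
    (hone : 1 ∉ X) : IsDivisibleDesignCayley H X X.ncard L₁ L₂ where
  inv_eq := hinv
  one_notMem := hone
  natCard_neighbors g := natCard_mul_right_mem X g⁻¹
  natCard_common_neighbors g h hgh := by
    rw [natCard_translates_eq_correlation, ← correlation_inv, mul_inv_rev, inv_inv]
    exact hX _ (mul_inv_eq_one.not.mpr hgh)

end CayleyGraph

section GeneralizedDihedral

variable {A : Type*} [CommGroup A] {G : Type*} [Group G]

/-- `G` is the generalized dihedral group of `A`, embedded by `ι`, with reflecting element `b`. -/
structure IsGeneralizedDihedral (ι : A →* G) (b : G) : Prop where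
  injective : Function.Injective ι
  mul_self : b * b = 1
  conj (a : A) : b * ι a * b⁻¹ = ι a⁻¹
  notMem_range : b ∉ Set.range ι
  eq_or_eq (g : G) : (∃ a, g = ι a) ∨ ∃ a, g = ι a * b

/-- The subset `S ∪ Tb` of the generalized dihedral group of `A`, for `S, T ⊆ A`. -/
def dihedralSet (ι : A →* G) (b : G) (S T : Set A) : Set G :=
  ι '' S ∪ (fun a => ι a * b) '' T

namespace IsGeneralizedDihedral

variable {ι : A →* G} {b : G} (h : IsGeneralizedDihedral ι b)
include h

theorem reflection_mul (a : A) : b * ι a = ι a⁻¹ * b := by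
  rw [← h.conj a, inv_mul_cancel_right]

theorem mul_reflection_inv (a : A) : (ι a * b)⁻¹ = ι a * b := by
  rw [mul_inv_rev, inv_eq_of_mul_eq_one_left h.mul_self, ← map_inv, h.reflection_mul, inv_inv]

theorem mul_reflection_notMem_range (a : A) : ι a * b ∉ Set.range ι := by
  rintro ⟨c, hc⟩
  exact h.notMem_range ⟨a⁻¹ * c, by rw [map_mul, hc, map_inv, inv_mul_cancel_left]⟩

theorem map_mem_dihedralSet {S T : Set A} {a : A} : ι a ∈ dihedralSet ι b S T ↔ a ∈ S := by
  refine ⟨?_, fun ha => Or.inl ⟨a, ha, rfl⟩⟩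
  rintro (hS | ⟨c, -, hc⟩)
  · exact (h.injective.mem_set_image).mp hS
  · exact absurd ⟨a, hc.symm⟩ (h.mul_reflection_notMem_range c)

theorem mul_reflection_mem_dihedralSet {S T : Set A} {a : A} :
    ι a * b ∈ dihedralSet ι b S T ↔ a ∈ T := by
  refine ⟨?_, fun ha => Or.inr ⟨a, ha, rfl⟩⟩
  rintro (⟨c, -, hc⟩ | ⟨c, hcT, hc⟩)
  · exact absurd ⟨c, hc⟩ (h.mul_reflection_notMem_range a)
  · rwa [← h.injective (mul_right_cancel hc)]

theorem one_mem_dihedralSet {S T : Set A} : 1 ∈ dihedralSet ι b S T ↔ 1 ∈ S := by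
  rw [← map_one ι, h.map_mem_dihedralSet]

theorem dihedralSet_inv (S T : Set A) : (dihedralSet ι b S T)⁻¹ = dihedralSet ι b S⁻¹ T := by
  ext g
  rw [Set.mem_inv]
  rcases h.eq_or_eq g with ⟨a, rfl⟩ | ⟨a, rfl⟩
  · rw [← map_inv, h.map_mem_dihedralSet, h.map_mem_dihedralSet, Set.mem_inv]
  · rw [h.mul_reflection_inv, h.mul_reflection_mem_dihedralSet, h.mul_reflection_mem_dihedralSet]

theorem ncard_eq_add [Finite A] (X : Set G) :
    X.ncard = {a | ι a ∈ X}.ncard + {a | ι a * b ∈ X}.ncard := by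
  have hX : X = dihedralSet ι b {a | ι a ∈ X} {a | ι a * b ∈ X} := by
    ext g
    rcases h.eq_or_eq g with ⟨a, rfl⟩ | ⟨a, rfl⟩
    · rw [h.map_mem_dihedralSet, Set.mem_ofPred]
    · rw [h.mul_reflection_mem_dihedralSet, Set.mem_ofPred]
  have hdisj : Disjoint (ι '' {a | ι a ∈ X}) ((fun a => ι a * b) '' {a | ι a * b ∈ X}) := by
    rw [Set.disjoint_left]
    rintro _ ⟨a, -, rfl⟩ ⟨c, -, hc⟩
    exact h.mul_reflection_notMem_range c ⟨a, hc.symm⟩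
  conv_lhs => rw [hX, dihedralSet]
  rw [Set.ncard_union_eq hdisj, Set.ncard_image_of_injective _ h.injective,
    Set.ncard_image_of_injective (f := fun a => ι a * b) _
      ((mul_left_injective b).comp h.injective)]

theorem ncard_dihedralSet [Finite A] (S T : Set A) :
    (dihedralSet ι b S T).ncard = S.ncard + T.ncard := by
  simp only [h.ncard_eq_add, h.map_mem_dihedralSet, h.mul_reflection_mem_dihedralSet,
    Set.ofPred_mem_eq]

theorem correlation_dihedralSet_map [Finite A] (S T S' T' : Set A) (c : A) :
    correlation (dihedralSet ι b S T) (dihedralSet ι b S' T') (ι c)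
      = correlation S S' c + correlation T T' c⁻¹ := by
  have hrefl (a : A) : ι a * b * ι c⁻¹ = ι (a * c) * b := by
    rw [mul_assoc, h.reflection_mul, inv_inv, ← mul_assoc, map_mul]
  unfold correlation
  rw [h.ncard_eq_add]
  simp only [Set.mem_ofPred, ← map_inv, hrefl, ← map_mul,
    h.map_mem_dihedralSet, h.mul_reflection_mem_dihedralSet, inv_inv]

theorem correlation_dihedralSet_mul_reflection [Finite A] (S T S' T' : Set A) (c : A) :
    correlation (dihedralSet ι b S T) (dihedralSet ι b S' T') (ι c * b)
      = correlation S T' c⁻¹ + correlation T S' c := by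
  have hrot (a : A) : ι a * (ι c * b)⁻¹ = ι (a * c) * b := by
    rw [h.mul_reflection_inv, ← mul_assoc, map_mul]
  have hrefl (a : A) : ι a * b * (ι c * b)⁻¹ = ι (a * c⁻¹) := by
    rw [mul_inv_rev, mul_assoc, mul_inv_cancel_left, ← map_inv, map_mul]
  unfold correlation
  rw [h.ncard_eq_add]
  simp only [Set.mem_ofPred, hrefl, hrot,
    h.map_mem_dihedralSet, h.mul_reflection_mem_dihedralSet, inv_inv]

theorem isDivisibleDifferenceSet_dihedralSet [Finite A] {N : Subgroup A} {E : Set A} {μ l : ℕ}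
    (hE : IsDivisibleDifferenceSet N E l (l + Nat.card N)) (hμ : MeetsCosetsIn N E μ) :
    IsDivisibleDifferenceSet ι.range (dihedralSet ι b (N : Set A)ᶜ E)
      (Nat.card N * (N.index - 1) + l) (2 * (N.index - 1) * μ) := by
  intro g hg
  rcases h.eq_or_eq g with ⟨c, rfl⟩ | ⟨c, rfl⟩
  · have hc : c ≠ 1 := fun hc => hg (by rw [hc, map_one])
    have hN : _ + (Nat.card N + Nat.card N) = _ := correlation_compl_compl (N : Set A) N c
    have hcard := natCard_mul_index_sub_one_add N
    rw [if_pos ⟨c, rfl⟩, h.correlation_dihedralSet_map, correlation_inv, hE c hc]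
    rw [correlation_subgroup] at hN
    split_ifs at hN ⊢ <;> omega
  · have hc : ι c * b ∉ ι.range := h.mul_reflection_notMem_range c
    rw [if_neg hc, h.correlation_dihedralSet_mul_reflection, correlation_inv, hμ.correlation_compl]
    ring

theorem isDivisibleDesignCayley_dihedralSet [Finite A] {N : Subgroup A} {E : Set A} {L₁ L₂ : ℕ}
    (hX : IsDivisibleDifferenceSet ι.range (dihedralSet ι b (N : Set A)ᶜ E) L₁ L₂) :
    IsDivisibleDesignCayley ι.range (dihedralSet ι b (N : Set A)ᶜ E)
      (Nat.card N * (N.index - 1) + E.ncard) L₁ L₂ := by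
  rw [← ncard_compl_subgroup, ← h.ncard_dihedralSet]
  refine hX.isDivisibleDesignCayley ?_ fun hone => h.one_mem_dihedralSet.mp hone N.one_mem
  rw [h.dihedralSet_inv, Set.compl_inv, inv_coe_set]

theorem exists_isDivisibleDesignCayley [Finite A] {N : Subgroup A} {E : Set A}
    (hE : SatisfiesEqOne N E) :
    ∃ L₁ L₂ : ℕ,
      (L₁ : ℚ) = Nat.card N * (N.index - 1)
        + E.ncard * (E.ncard - N.index) / ((Nat.card N - 1) * N.index) ∧
      (L₂ : ℚ) = 2 * (N.index - 1) * E.ncard / N.index ∧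
      L₁ ≠ L₂ ∧
      IsDivisibleDesignCayley ι.range (dihedralSet ι b (N : Set A)ᶜ E)
        (Nat.card N * (N.index - 1) + E.ncard) L₁ L₂ := by
  obtain ⟨hm, hn, ⟨l₁, l₂, hdds⟩, ⟨μ, hμ⟩, hprod, hne⟩ := hE
  have hl := hdds.lambda_two_eq_lambda_one_add hμ hm hn hprod
  have hX := h.isDivisibleDifferenceSet_dihedralSet (hl ▸ hdds) hμ
  refine ⟨_, _, ?_, ?_, ?_, h.isDivisibleDesignCayley_dihedralSet hX⟩
  · push_cast [Nat.cast_sub hm.le]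
    rw [hdds.cast_lambda_one hμ hn]
  · have hm₀ : (N.index : ℚ) ≠ 0 := by positivity
    rw [hμ.ncard_eq]
    push_cast [Nat.cast_sub hm.le]
    field_simp
  · exact fun heq => hne (hdds.eq_four_two_four_of_lambda_eq hμ hm hn hprod heq)

end IsGeneralizedDihedral

end GeneralizedDihedral

/-- for a divisible difference set `D` relative to `N ≤ A` with
`m, n > 1`, `k ≤ mn − k`, satisfying the intersection condition, Eq. (1)
`1/k + 1/(mn−k) = 1/(n−1) − 1/n` and `(m,n,k) ≠ (4,2,4)`, the Cayley graphs
`Cay(G, X2 ∪ X3)` and `Cay(G, X2 ∪ X4)` over `G = Dih(A)` are proper divisible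
design graphs with parameters `v' = 2mn`, `k' = n(m−1) + kᵢ`,
`λ1' = n(m−1) + kᵢ(kᵢ−m)/((n−1)m)`, `λ2' = 2(m−1)kᵢ/m`, `m' = 2`, `n' = mn`,
with canonical partition into the two cosets of `A` in `G`. -/
theorem dihedral_ddg_eq1
    (A : Type*) [CommGroup A] [Fintype A] [DecidableEq A]
    (G : Type*) [Group G] [Fintype G]
    (ι : A →* G) (hinj : Function.Injective ι)
    (b : G) (hb2 : b * b = 1) (hb1 : b ≠ 1)
    (hbconj : ∀ a : A, b * ι a * b⁻¹ = ι a⁻¹)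
    (hbnot : b ∉ Set.range ι)
    (hcardG : Fintype.card G = 2 * Fintype.card A)
    (hdecomp : ∀ g : G, (∃ a, g = ι a) ∨ (∃ a, g = ι a * b))
    (N : Subgroup A) (hNtop : N ≠ ⊤) (hNbot : N ≠ ⊥)
    (D : Set A) (hDne : D.Nonempty)
    (m n k l1 l2 : ℕ) (hm : N.index = m) (hn : Nat.card N = n)
    (hk : Nat.card D = k) (hm1 : 1 < m) (hn1 : 1 < n)
    (hdds : ∀ g : A, g ≠ 1 →
      Nat.card {pr : A × A // pr.1 ∈ D ∧ pr.2 ∈ D ∧ pr.1 * pr.2⁻¹ = g}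
        = if g ∈ N then l1 else l2)
    (hic : ∃ μ : ℕ, ∀ g : A, Nat.card {x : A // x ∈ D ∧ x * g⁻¹ ∈ N} = μ)
    (hkle : k ≤ m * n - k) (hkmn : k ≤ m * n)
    (heq : 1 / (k : ℚ) + 1 / ((m * n - k : ℕ) : ℚ)
        = 1 / ((n : ℚ) - 1) - 1 / (n : ℚ))
    (hne : ¬(m = 4 ∧ n = 2 ∧ k = 4))
    (X2 : Set G) (hX2 : X2 = ι '' ((Set.univ : Set A) \ (N : Set A))) :
    ∀ (Xi : Set G) (ki : ℕ),
      ((Xi = (fun a => ι a * b) '' D ∧ ki = k) ∨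
        (Xi = (fun a => ι a * b) '' ((Set.univ : Set A) \ D) ∧ ki = m * n - k)) →
      ∃ l1' l2' : ℕ,
        (l1' : ℚ) = (n : ℚ) * ((m : ℚ) - 1)
            + (ki : ℚ) * ((ki : ℚ) - (m : ℚ)) / (((n : ℚ) - 1) * (m : ℚ)) ∧
        (l2' : ℚ) = 2 * ((m : ℚ) - 1) * (ki : ℚ) / (m : ℚ) ∧
        (X2 ∪ Xi)⁻¹ = X2 ∪ Xi ∧
        (1 : G) ∉ X2 ∪ Xi ∧
        Fintype.card G = 2 * (m * n) ∧
        (∀ g : G, Nat.card {x : G // x * g⁻¹ ∈ Set.range ι} = m * n) ∧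
        (∀ g : G, Nat.card {x : G // x * g⁻¹ ∈ X2 ∪ Xi} = n * (m - 1) + ki) ∧
        (∀ g h : G, g ≠ h →
          Nat.card {x : G // x * g⁻¹ ∈ X2 ∪ Xi ∧ x * h⁻¹ ∈ X2 ∪ Xi}
            = if g * h⁻¹ ∈ Set.range ι then l1' else l2') ∧
        l1' ≠ l2' ∧ 1 < m * n := by
  subst hm hn hk hX2
  have hdih : IsGeneralizedDihedral ι b := ⟨hinj, hb2, hbconj, hbnot, hdecomp⟩
  have hA : N.index * Nat.card N = Nat.card A := N.index_mul_card
  have hDc : N.index * Nat.card N - Nat.card D = Dᶜ.ncard := by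
    rw [hA, Set.ncard_compl, Nat.card_coe_set_eq]
  rw [hDc] at hkle heq
  have hDds : IsDivisibleDifferenceSet N D l1 l2 := fun g hg =>
    (natCard_div_eq_correlation D D g).symm.trans (hdds g hg)
  have hD₀ : D.ncard ≠ 0 := D.ncard_ne_zero_of_mem hDne.some_mem
  have hD : SatisfiesEqOne N D := ⟨hm1, hn1, ⟨l1, l2, hDds⟩, hic,
    mul_eq_of_one_div_add_one_div hD₀ (hD₀.bot_lt.trans_le hkle).ne' hn1
      (hA ▸ Set.ncard_add_ncard_compl D) heq, hne⟩
  intro Xi ki hXi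
  obtain ⟨E, hE, rfl, rfl⟩ : ∃ E, SatisfiesEqOne N E ∧ Xi = (fun a => ι a * b) '' E ∧
      ki = E.ncard := by
    rw [hDc, ← Set.compl_eq_univ_sdiff] at hXi
    exact hXi.elim (⟨D, hD, ·⟩) (⟨Dᶜ, hD.compl, ·⟩)
  obtain ⟨L₁, L₂, hL₁, hL₂, hL, hX⟩ := hdih.exists_isDivisibleDesignCayley hE
  rw [← Set.compl_eq_univ_sdiff]
  exact ⟨L₁, L₂, hL₁, hL₂, hX.inv_eq, hX.one_notMem, by rw [hcardG, hA, Nat.card_eq_fintype_card],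
    fun g => (natCard_mul_right_mem _ g⁻¹).trans ((Nat.card_range_of_injective hinj).trans hA.symm),
    hX.natCard_neighbors,
    fun g h hgh => (hX.natCard_common_neighbors g h hgh).trans (by congr 1), hL,
    Nat.mul_lt_mul'' hm1 hn1⟩
end
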